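/- Let λ ∈ ℂ. Then there exist constants C, c > 0, a potential V : ℝ² → ℂ, and a nonzero twice continuously differentiable function u : ℝ² → ℂ such that Δu + λu = V·u on ℝ², |V(x)| ≤ C·log|x|·⟨x⟩^{-1/2} for all x ∈ ℝ² with |x| ≥ 2, |V(x)| ≤ C for all x with |x| < 2, and |u(x)| ≤ C·exp(−c|x|) for all x ∈ ℝ². -/

import Mathlib

noncomputable section

/-- Partial derivative of `u` in the `i`-th coordinate direction. -/
def pd (u : EuclideanSpace ℝ (Fin 2) → ℂ) (i : Fin 2) (x : EuclideanSpace ℝ (Fin 2)) : ℂ :=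
  fderiv ℝ u x (EuclideanSpace.single i 1)

/-- Laplacian on ℝ²: sum of second partial derivatives. -/
def lap (u : EuclideanSpace ℝ (Fin 2) → ℂ) (x : EuclideanSpace ℝ (Fin 2)) : ℂ :=
  ∑ i, pd (fun y => pd u i y) i x

local notation "E2" => EuclideanSpace ℝ (Fin 2)
open Filter Topology



lemma finish_aux (lam : ℂ) (u : E2 → ℂ) (C c C' : ℝ) (hC : 0 < C) (hC' : 0 < C') (hc : 0 < c)
    (hu0 : u ≠ 0) (hu : ContDiff ℝ 2 u)
    (hL : ∀ x, ‖lap u x + lam * u x‖ ≤ C * Real.sqrt (1 + ‖x‖ ^ 2) ^ (-(1 / 2 : ℝ)) * ‖u x‖)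
    (hd : ∀ x, ‖u x‖ ≤ C' * Real.exp (-(c * ‖x‖))) :
    ∃ (C c : ℝ) (V u : EuclideanSpace ℝ (Fin 2) → ℂ),
      0 < C ∧ 0 < c ∧ u ≠ 0 ∧ ContDiff ℝ 2 u ∧
      (∀ x, lap u x + lam * u x = V x * u x) ∧
      (∀ x, 2 ≤ ‖x‖ →
        ‖V x‖ ≤ C * Real.log ‖x‖ * Real.sqrt (1 + ‖x‖ ^ 2) ^ (-(1 / 2 : ℝ))) ∧
      (∀ x, ‖x‖ < 2 → ‖V x‖ ≤ C) ∧
      (∀ x, ‖u x‖ ≤ C * Real.exp (-(c * ‖x‖))) := by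
  have hpos : ∀ x : E2, 0 < Real.sqrt (1 + ‖x‖ ^ 2) ^ (-(1 / 2 : ℝ)) := fun x => by positivity
  have hle : ∀ x : E2, Real.sqrt (1 + ‖x‖ ^ 2) ^ (-(1 / 2 : ℝ)) ≤ 1 := fun x => by
    apply Real.rpow_le_one_of_one_le_of_nonpos
    · rw [Real.one_le_sqrt]; nlinarith [sq_nonneg ‖x‖]
    · norm_num
  have hV : ∀ x, ‖(lap u x + lam * u x) / u x‖ ≤ C * Real.sqrt (1 + ‖x‖ ^ 2) ^ (-(1 / 2 : ℝ)) := by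
    intro x
    by_cases h : u x = 0
    · rw [h]; simp only [div_zero, norm_zero]; have := hpos x; positivity
    · rw [norm_div, div_le_iff₀ (norm_pos_iff.2 h)]; exact hL x
  refine ⟨2 * C + C', c, fun x => (lap u x + lam * u x) / u x, u, by positivity, hc, hu0, hu,
    ?_, ?_, ?_, ?_⟩
  · intro x
    by_cases h : u x = 0
    · have := hL x
      rw [h] at this
      simp only [norm_zero, mul_zero] at this
      rw [h, mul_zero, mul_zero]
      simpa using this
    · field_simp
  · intro x hx
    refine (hV x).trans ?_
    have h2 : 1 / 2 ≤ Real.log ‖x‖ := by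
      have := Real.log_le_log (by norm_num) hx
      have := Real.log_two_gt_d9
      linarith
    have : C ≤ (2 * C + C') * Real.log ‖x‖ := by nlinarith
    exact mul_le_mul_of_nonneg_right this (hpos x).le
  · intro x _
    refine (hV x).trans ?_
    have := hle x
    nlinarith
  · intro x
    refine (hd x).trans ?_
    have : 0 < Real.exp (-(c * ‖x‖)) := Real.exp_pos _
    nlinarith

lemma lap_eq (u : E2 → ℂ) (x : E2) (hu : ContDiffAt ℝ 2 u x) :
    lap u x = ∑ i : Fin 2, fderiv ℝ (fderiv ℝ u) x (EuclideanSpace.single i 1)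
      (EuclideanSpace.single i 1) := by
  unfold lap pd
  refine Finset.sum_congr rfl fun i _ => ?_
  have h1 : DifferentiableAt ℝ (fderiv ℝ u) x :=
    (hu.fderiv_right (m := 1) (by norm_num)).differentiableAt (by norm_num)
  have := (h1.hasFDerivAt.clm_apply (hasFDerivAt_const (EuclideanSpace.single i (1:ℝ)) x)).fderiv
  rw [this]
  simp

lemma lap_congr {u v : E2 → ℂ} {x : E2} (h : u =ᶠ[𝓝 x] v) : lap u x = lap v x := by
  unfold lap pd
  refine Finset.sum_congr rfl fun i _ => ?_
  have : (fun y => fderiv ℝ u y (EuclideanSpace.single i 1)) =ᶠ[𝓝 x]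
      (fun y => fderiv ℝ v y (EuclideanSpace.single i 1)) := by
    filter_upwards [h.eventuallyEq_nhds] with y hy
    rw [hy.fderiv_eq]
  rw [this.fderiv_eq]

lemma lap_add {u v : E2 → ℂ} {x : E2} (hu : ContDiffAt ℝ 2 u x) (hv : ContDiffAt ℝ 2 v x) :
    lap (fun y => u y + v y) x = lap u x + lap v x := by
  rw [lap_eq _ _ hu, lap_eq _ _ hv, lap_eq _ _ (hu.add hv), ← Finset.sum_add_distrib]
  refine Finset.sum_congr rfl fun i _ => ?_
  have : fderiv ℝ (fun y => u y + v y) =ᶠ[𝓝 x] fun y => fderiv ℝ u y + fderiv ℝ v y := by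
    filter_upwards [hu.eventually (by simp), hv.eventually (by simp)] with y h1 h2
    exact fderiv_add (h1.differentiableAt (by norm_num)) (h2.differentiableAt (by norm_num))
  rw [this.fderiv_eq]
  have h1 : DifferentiableAt ℝ (fderiv ℝ u) x :=
    (hu.fderiv_right (m := 1) (by norm_num)).differentiableAt (by norm_num)
  have h2 : DifferentiableAt ℝ (fderiv ℝ v) x :=
    (hv.fderiv_right (m := 1) (by norm_num)).differentiableAt (by norm_num)
  rw [fderiv_fun_add h1 h2]
  simp

/-- Log-polar coordinates. -/
def Psi (t θ : ℝ) : E2 := !₂[Real.exp t * Real.cos θ, Real.exp t * Real.sin θ]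

/-- Angular direction. -/
def PsiP (t θ : ℝ) : E2 := !₂[-(Real.exp t * Real.sin θ), Real.exp t * Real.cos θ]

lemma hasDerivAt_euc {f : ℝ → E2} {f' : E2} {t : ℝ}
    (h : ∀ i, HasDerivAt (fun s => f s i) (f' i) t) : HasDerivAt f f' t := by
  rw [hasDerivAt_iff_hasFDerivAt, ← hasFDerivWithinAt_univ, hasFDerivWithinAt_euclidean]
  intro i
  have := (h i).hasFDerivAt.hasFDerivWithinAt (s := Set.univ)
  have e : (PiLp.proj 2 (fun _ : Fin 2 => ℝ) i).comp (ContinuousLinearMap.toSpanSingleton ℝ f') =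
      ContinuousLinearMap.toSpanSingleton ℝ (f' i) := by
    ext
    simp
  rw [e]
  exact this

lemma Psi_deriv_t (t θ : ℝ) : HasDerivAt (fun s => Psi s θ) (Psi t θ) t := by
  apply hasDerivAt_euc
  intro i
  fin_cases i
  · simpa [Psi] using (Real.hasDerivAt_exp t).mul_const (Real.cos θ)
  · simpa [Psi] using (Real.hasDerivAt_exp t).mul_const (Real.sin θ)

lemma Psi_deriv_th (t θ : ℝ) : HasDerivAt (fun s => Psi t s) (PsiP t θ) θ := by
  apply hasDerivAt_euc
  intro i
  fin_cases i
  · simpa [Psi, PsiP] using (Real.hasDerivAt_cos θ).const_mul (Real.exp t)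
  · simpa [Psi, PsiP] using (Real.hasDerivAt_sin θ).const_mul (Real.exp t)

lemma PsiP_deriv_th (t θ : ℝ) : HasDerivAt (fun s => PsiP t s) (-Psi t θ) θ := by
  apply hasDerivAt_euc
  intro i
  fin_cases i
  · simpa [Psi, PsiP] using ((Real.hasDerivAt_sin θ).const_mul (Real.exp t)).fun_neg
  · simpa [Psi, PsiP] using (Real.hasDerivAt_cos θ).const_mul (Real.exp t)

lemma Psi_norm (t θ : ℝ) : ‖Psi t θ‖ = Real.exp t := by
  rw [EuclideanSpace.norm_eq]
  simp only [Psi, Fin.sum_univ_two, Real.norm_eq_abs, sq_abs]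
  simp
  rw [Real.sqrt_eq_iff_mul_self_eq (by positivity) (by positivity)]
  nlinarith [Real.sin_sq_add_cos_sq θ]

lemma Psi_surj (x : E2) (hx : x ≠ 0) : ∃ θ, x = Psi (Real.log ‖x‖) θ := by
  have hn : 0 < ‖x‖ := norm_pos_iff.2 hx
  have h1 : ‖(⟨x 0, x 1⟩ : ℂ)‖ = ‖x‖ := by
    rw [EuclideanSpace.norm_eq, Complex.norm_def, Complex.normSq_mk]
    simp [Fin.sum_univ_two, sq]
  refine ⟨Complex.arg ⟨x 0, x 1⟩, ?_⟩
  ext i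
  have h := Complex.norm_mul_cos_arg ⟨x 0, x 1⟩
  have h' := Complex.norm_mul_sin_arg ⟨x 0, x 1⟩
  rw [h1] at h h'
  fin_cases i
  · simpa [Psi, Real.exp_log hn] using h.symm
  · simpa [Psi, Real.exp_log hn] using h'.symm

lemma polar_alg (D2 : E2 →L[ℝ] E2 →L[ℝ] ℂ) (D1 : E2 →L[ℝ] ℂ) (t θ : ℝ) :
    (∑ i : Fin 2, D2 (EuclideanSpace.single i 1) (EuclideanSpace.single i 1)) *
      (Real.exp t : ℂ) ^ 2 = D2 (Psi t θ) (Psi t θ) + D1 (Psi t θ) +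
      ((D2 (PsiP t θ)) (PsiP t θ) + D1 (-(Psi t θ))) := by
  have b1 : Psi t θ = (Real.exp t * Real.cos θ) • EuclideanSpace.single (0 : Fin 2) (1:ℝ)
      + (Real.exp t * Real.sin θ) • EuclideanSpace.single (1 : Fin 2) (1:ℝ) := by
    ext i; fin_cases i <;> simp [Psi]
  have b2 : PsiP t θ = (-(Real.exp t * Real.sin θ)) • EuclideanSpace.single (0 : Fin 2) (1:ℝ)
      + (Real.exp t * Real.cos θ) • EuclideanSpace.single (1 : Fin 2) (1:ℝ) := by
    ext i; fin_cases i <;> simp [PsiP]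
  have hsc : (Real.sin θ : ℂ) ^ 2 + (Real.cos θ : ℂ) ^ 2 = 1 := by
    exact_mod_cast Real.sin_sq_add_cos_sq θ
  rw [map_neg]
  have : (D2 (Psi t θ)) (Psi t θ) + D1 (Psi t θ) +
      ((D2 (PsiP t θ)) (PsiP t θ) + -(D1 (Psi t θ))) =
      (D2 (Psi t θ)) (Psi t θ) + (D2 (PsiP t θ)) (PsiP t θ) := by ring
  rw [this, b1, b2]
  rw [Fin.sum_univ_two]
  generalize EuclideanSpace.single (0 : Fin 2) (1:ℝ) = v0
  generalize EuclideanSpace.single (1 : Fin 2) (1:ℝ) = v1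
  simp only [map_add, map_smul, add_apply, smul_apply,
    Complex.real_smul]
  push_cast
  push_cast at hsc
  linear_combination (-(D2 v0 v0) - (D2 v1 v1)) * (Complex.exp t)^2 * hsc

lemma lap_polar (u : E2 → ℂ) (t θ : ℝ) (hu : ContDiffAt ℝ 2 u (Psi t θ)) (g1 h1 : ℝ → ℂ)
    (g2 h2 : ℂ)
    (hg1 : ∀ᶠ s in 𝓝 t, HasDerivAt (fun s => u (Psi s θ)) (g1 s) s) (hg2 : HasDerivAt g1 g2 t)
    (hh1 : ∀ᶠ s in 𝓝 θ, HasDerivAt (fun s => u (Psi t s)) (h1 s) s) (hh2 : HasDerivAt h1 h2 θ) :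
    lap u (Psi t θ) * (Real.exp t : ℂ) ^ 2 = g2 + h2 := by
  have hD : DifferentiableAt ℝ (fderiv ℝ u) (Psi t θ) :=
    (hu.fderiv_right (m := 1) (by norm_num)).differentiableAt (by norm_num)
  have hev := hu.eventually (by simp)
  have e1 : g1 =ᶠ[𝓝 t] fun s => fderiv ℝ u (Psi s θ) (Psi s θ) := by
    filter_upwards [hg1, (Psi_deriv_t t θ).continuousAt.eventually hev] with s hs h
    exact hs.unique ((h.differentiableAt (by norm_num)).hasFDerivAt.comp_hasDerivAt s
      (Psi_deriv_t s θ))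
  have e2 : h1 =ᶠ[𝓝 θ] fun s => fderiv ℝ u (Psi t s) (PsiP t s) := by
    filter_upwards [hh1, (Psi_deriv_th t θ).continuousAt.eventually hev] with s hs h
    exact hs.unique ((h.differentiableAt (by norm_num)).hasFDerivAt.comp_hasDerivAt s
      (Psi_deriv_th t s))
  have q1 : HasDerivAt (fun s => fderiv ℝ u (Psi s θ))
      (fderiv ℝ (fderiv ℝ u) (Psi t θ) (Psi t θ)) t :=
    hD.hasFDerivAt.comp_hasDerivAt t (Psi_deriv_t t θ)
  have q2 : HasDerivAt (fun s => fderiv ℝ u (Psi t s))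
      (fderiv ℝ (fderiv ℝ u) (Psi t θ) (PsiP t θ)) θ :=
    hD.hasFDerivAt.comp_hasDerivAt θ (Psi_deriv_th t θ)
  have k1 := hg2.unique ((q1.clm_apply (Psi_deriv_t t θ)).congr_of_eventuallyEq e1)
  have k2 := hh2.unique ((q2.clm_apply (PsiP_deriv_th t θ)).congr_of_eventuallyEq e2)
  rw [k1, k2, lap_eq _ _ hu]
  exact polar_alg (fderiv ℝ (fderiv ℝ u) (Psi t θ)) (fderiv ℝ u (Psi t θ)) t θ


/-- Japanese bracket. -/
def jap (x : E2) : ℝ := Real.sqrt (1 + ‖x‖ ^ 2)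

lemma jap_pos (x : E2) : 0 < jap x := by unfold jap; positivity

lemma jap_sq (x : E2) : jap x ^ 2 = 1 + ‖x‖ ^ 2 := by
  unfold jap; exact Real.sq_sqrt (by positivity)

lemma jap_deriv (x : E2) : HasFDerivAt jap ((1 / jap x) • innerSL ℝ x) x := by
  have h1 : HasFDerivAt (fun y : E2 => 1 + ‖y‖ ^ 2) (2 • innerSL ℝ x) x :=
    (hasStrictFDerivAt_norm_sq x).hasFDerivAt.const_add 1
  have h2 := h1.sqrt (by positivity)
  have e : (1 / (2 * √(1 + ‖x‖ ^ 2))) • (2 • innerSL ℝ x) = (1 / jap x) • innerSL ℝ x := by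
    have := jap_pos x
    rw [show √(1 + ‖x‖ ^ 2) = jap x from rfl]
    ext v
    simp
    field_simp
  rw [e] at h2
  exact h2

lemma easy_case (lam k : ℂ) (hk : k ^ 2 = -lam) (hre : 0 < k.re) :
    ∃ (C c : ℝ) (V u : EuclideanSpace ℝ (Fin 2) → ℂ),
      0 < C ∧ 0 < c ∧ u ≠ 0 ∧ ContDiff ℝ 2 u ∧
      (∀ x, lap u x + lam * u x = V x * u x) ∧
      (∀ x, 2 ≤ ‖x‖ →
        ‖V x‖ ≤ C * Real.log ‖x‖ * Real.sqrt (1 + ‖x‖ ^ 2) ^ (-(1 / 2 : ℝ))) ∧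
      (∀ x, ‖x‖ < 2 → ‖V x‖ ≤ C) ∧
      (∀ x, ‖u x‖ ≤ C * Real.exp (-(c * ‖x‖))) := by
  set u : E2 → ℂ := fun x => Complex.exp (-k * (jap x : ℂ)) with hu
  have hd : ∀ x, HasFDerivAt u (u x • (-k • Complex.ofRealCLM.comp ((1 / jap x) • innerSL ℝ x))) x := by
    intro x
    have h1 : HasFDerivAt (fun y : E2 => ((jap y : ℝ) : ℂ))
        (Complex.ofRealCLM.comp ((1 / jap x) • innerSL ℝ x)) x :=
      Complex.ofRealCLM.hasFDerivAt.comp x (jap_deriv x)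
    exact (h1.const_mul (-k)).cexp
  have hpd : ∀ (i : Fin 2) (x : E2), pd u i x = -k * ((x i / jap x : ℝ) : ℂ) * u x := by
    intro i x
    unfold pd
    rw [(hd x).fderiv]
    simp [EuclideanSpace.inner_single_right]
    ring
  have hpd2 : ∀ (i : Fin 2) (x : E2), pd (fun y => pd u i y) i x =
      (-k * ((1 / jap x - (x i)^2 / jap x ^ 3 : ℝ) : ℂ) + k ^ 2 * ((x i / jap x : ℝ) : ℂ) ^ 2)
        * u x := by
    intro i x
    have hfun : (fun y => pd u i y) = fun y => -k * ((y i / jap y : ℝ) : ℂ) * u y := by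
      funext y; exact hpd i y
    rw [hfun]
    have hj := (jap_pos x).ne'
    have h0 : HasFDerivAt (fun y : E2 => y i) (EuclideanSpace.proj i : E2 →L[ℝ] ℝ) x :=
      (EuclideanSpace.proj i : E2 →L[ℝ] ℝ).hasFDerivAt
    have hinv : HasFDerivAt (fun y : E2 => (jap y)⁻¹) _ x :=
      (hasDerivAt_inv hj).comp_hasFDerivAt x (jap_deriv x)
    have h1 := h0.fun_mul hinv
    simp only [← div_eq_mul_inv] at h1
    have h2 : HasFDerivAt (fun y : E2 => ((y i / jap y : ℝ) : ℂ)) _ x :=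
      Complex.ofRealCLM.hasFDerivAt.comp x h1
    have h3 := (h2.const_mul (-k)).fun_mul (hd x)
    unfold pd
    rw [h3.fderiv]
    have hjc : (jap x : ℂ) ≠ 0 := by exact_mod_cast hj
    simp [EuclideanSpace.inner_single_right]
    field_simp
    ring
  have hlap : ∀ x, lap u x + lam * u x = (-k * ((2 / jap x - ‖x‖ ^ 2 / jap x ^ 3 : ℝ) : ℂ)
      - k ^ 2 * ((1 / jap x ^ 2 : ℝ) : ℂ)) * u x := by
    intro x
    unfold lap
    rw [Fin.sum_univ_two, hpd2, hpd2]
    have hn : ‖x‖ ^ 2 = x 0 ^ 2 + x 1 ^ 2 := by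
      rw [EuclideanSpace.norm_eq, Real.sq_sqrt (by positivity), Fin.sum_univ_two]; simp
    have hj := (jap_pos x).ne'
    have hjc : (jap x : ℂ) ≠ 0 := by exact_mod_cast hj
    have hs : (jap x : ℂ) ^ 2 = 1 + ((x 0 : ℂ) ^ 2 + (x 1 : ℂ) ^ 2) := by
      exact_mod_cast (hn ▸ jap_sq x)
    have hl : lam = - k ^ 2 := by rw [hk]; ring
    rw [hn, hl]
    push_cast
    field_simp
    linear_combination (-(k^2) * (jap x : ℂ) * u x) * hs
  have hun : ∀ x, ‖u x‖ = Real.exp (-(k.re * jap x)) := by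
    intro x
    simp [hu, Complex.norm_exp]
  have hx : ∀ x : E2, ‖x‖ ≤ jap x := fun x => by
    unfold jap; apply Real.le_sqrt_of_sq_le; linarith
  have h1j : ∀ x : E2, 1 ≤ jap x := fun x => by
    unfold jap; rw [Real.one_le_sqrt]; nlinarith [sq_nonneg ‖x‖]
  refine finish_aux lam u (3 * ‖k‖ + ‖k‖ ^ 2) k.re 1 ?_ one_pos hre ?_ ?_ ?_ ?_
  · have : 0 < ‖k‖ := norm_pos_iff.2 (by rintro rfl; simp at hre)
    positivity
  · intro h
    have := congrFun h 0
    simp [hu] at this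
  · have : ContDiff ℝ 2 jap := by
      unfold jap
      apply ContDiff.sqrt
      · exact contDiff_const.add (contDiff_norm_sq ℝ)
      · intro x; positivity
    have h2 : ContDiff ℝ 2 (fun x => (jap x : ℂ)) := Complex.ofRealCLM.contDiff.comp this
    exact (contDiff_const.mul h2).cexp
  · intro x
    rw [hlap, norm_mul]
    apply mul_le_mul_of_nonneg_right _ (norm_nonneg _)
    have hJ := jap_pos x
    have a1 : 1 / jap x ^ 2 ≤ 1 / jap x := by
      apply one_div_le_one_div_of_le hJ; nlinarith [h1j x]
    have a0 : 0 ≤ ‖x‖ ^ 2 / jap x ^ 3 := by positivity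
    have a2 : ‖x‖ ^ 2 / jap x ^ 3 ≤ 1 / jap x := by
      rw [div_le_div_iff₀ (by positivity) hJ]
      have := jap_sq x
      nlinarith
    have a3 : 1 / jap x ≤ jap x ^ (-(1/2:ℝ)) := by
      rw [one_div, ← Real.rpow_neg_one]
      exact Real.rpow_le_rpow_of_exponent_le (h1j x) (by norm_num)
    have b1 : ‖((2 / jap x - ‖x‖ ^ 2 / jap x ^ 3 : ℝ) : ℂ)‖ ≤ 3 * (1 / jap x) := by
      rw [Complex.norm_real, Real.norm_eq_abs, abs_le]
      have : 2 / jap x = 2 * (1 / jap x) := by ring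
      have : 0 < 1 / jap x := by positivity
      constructor <;> linarith
    have b2 : ‖((1 / jap x ^ 2 : ℝ) : ℂ)‖ ≤ 1 / jap x := by
      rw [Complex.norm_real, Real.norm_eq_abs, abs_of_nonneg (by positivity)]; exact a1
    calc _ ≤ ‖k‖ * (3 * (1 / jap x)) + ‖k‖ ^ 2 * (1 / jap x) := by
          refine (norm_sub_le _ _).trans (add_le_add ?_ ?_)
          · rw [norm_mul, norm_neg]; exact mul_le_mul_of_nonneg_left b1 (norm_nonneg _)
          · rw [norm_mul, norm_pow]; exact mul_le_mul_of_nonneg_left b2 (by positivity)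
      _ = (3 * ‖k‖ + ‖k‖ ^ 2) * (1 / jap x) := by ring
      _ ≤ _ := mul_le_mul_of_nonneg_left a3 (by positivity)
  · intro x
    rw [hun, one_mul]
    apply Real.exp_le_exp.2
    have := hx x
    nlinarith


/-- Unit complex number of `x`, or its conjugate when `σ = -1`. -/
def eu (σ : ℝ) (x : E2) : ℂ := ((x 0 : ℂ) + Complex.I * σ * (x 1 : ℂ)) / (‖x‖ : ℂ)

/-- The phase-exponent in log-polar coordinates. -/
def wph (α E : ℝ → ℝ) (σ : ℝ) (n N : ℕ) (t θ : ℝ) : ℂ :=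
  -(α t : ℂ) + Complex.I * (E t : ℂ) * (Real.sin (N * (σ * θ)) : ℂ) + Complex.I * (n * (σ * θ) : ℝ)

/-- Building block. -/
def Wt (X α E : ℝ → ℝ) (σ : ℝ) (n N : ℕ) (x : E2) : ℂ :=
  (X (Real.log ‖x‖) : ℂ) * Complex.exp (-(α (Real.log ‖x‖) : ℂ) +
    Complex.I * (E (Real.log ‖x‖) : ℂ) * ((eu σ x ^ N).im : ℂ)) * eu σ x ^ n

lemma eu_Psi (σ t θ : ℝ) (hσ : σ = 1 ∨ σ = -1) :
    eu σ (Psi t θ) = Complex.exp (Complex.I * (σ * θ : ℝ)) := by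
  have he : (Real.exp t : ℂ) ≠ 0 := by exact_mod_cast (Real.exp_pos t).ne'
  unfold eu
  rw [Psi_norm, mul_comm Complex.I ((σ * θ : ℝ) : ℂ), Complex.exp_mul_I]
  rw [div_eq_iff he]
  rcases hσ with rfl | rfl
  · simp [Psi]; ring
  · simp [Psi]; ring

lemma eu_Psi_pow (σ t θ : ℝ) (hσ : σ = 1 ∨ σ = -1) (N : ℕ) :
    eu σ (Psi t θ) ^ N = Complex.exp (Complex.I * (N * (σ * θ) : ℝ)) := by
  rw [eu_Psi σ t θ hσ, ← Complex.exp_nat_mul]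
  congr 1
  push_cast; ring

lemma Wt_Psi (X α E : ℝ → ℝ) (σ : ℝ) (hσ : σ = 1 ∨ σ = -1) (n N : ℕ) (t θ : ℝ) :
    Wt X α E σ n N (Psi t θ) = (X t : ℂ) * Complex.exp (wph α E σ n N t θ) := by
  unfold Wt wph
  rw [Psi_norm, Real.log_exp, eu_Psi_pow σ t θ hσ N, eu_Psi_pow σ t θ hσ n, mul_assoc,
    ← Complex.exp_add]
  congr 4
  rw [mul_comm Complex.I ((N * (σ * θ) : ℝ) : ℂ), Complex.exp_ofReal_mul_I_im]

lemma norm_exp_wph (α E : ℝ → ℝ) (σ : ℝ) (n N : ℕ) (t θ : ℝ) :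
    ‖Complex.exp (wph α E σ n N t θ)‖ = Real.exp (-(α t)) := by
  rw [Complex.norm_exp]
  congr 1
  simp only [wph, Complex.add_re, Complex.mul_re, Complex.neg_re, Complex.ofReal_re,
    Complex.ofReal_im, Complex.I_re, Complex.I_im, Complex.mul_im]
  ring

lemma eu_contDiffAt (σ : ℝ) (x : E2) (hx : x ≠ 0) : ContDiffAt ℝ 2 (eu σ) x := by
  have h0 : ∀ i : Fin 2, ContDiffAt ℝ 2 (fun y : E2 => ((y i : ℝ) : ℂ)) x := fun i =>
    (Complex.ofRealCLM.contDiff.comp (EuclideanSpace.proj i : E2 →L[ℝ] ℝ).contDiff).contDiffAt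
  have hn : ContDiffAt ℝ 2 (fun y : E2 => ((‖y‖ : ℝ) : ℂ)) x :=
    Complex.ofRealCLM.contDiff.contDiffAt.comp x (contDiffAt_norm ℝ hx)
  unfold eu
  simp only [div_eq_mul_inv]
  refine ((h0 0).add (contDiffAt_const.mul (h0 1))).mul (hn.inv ?_)
  exact_mod_cast (norm_pos_iff.2 hx).ne'

lemma Wt_contDiffAt (X α E : ℝ → ℝ) (σ : ℝ) (n N : ℕ) (x : E2) (hx : x ≠ 0)
    (hX : ContDiff ℝ 2 X) (hα : ContDiff ℝ 2 α) (hE : ContDiff ℝ 2 E) :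
    ContDiffAt ℝ 2 (Wt X α E σ n N) x := by
  have hl : ContDiffAt ℝ 2 (fun y : E2 => Real.log ‖y‖) x :=
    (contDiffAt_norm ℝ hx).log (norm_pos_iff.2 hx).ne'
  have hc : ∀ f : ℝ → ℝ, ContDiff ℝ 2 f →
      ContDiffAt ℝ 2 (fun y : E2 => ((f (Real.log ‖y‖) : ℝ) : ℂ)) x := fun f hf =>
    Complex.ofRealCLM.contDiff.contDiffAt.comp x (hf.contDiffAt.comp x hl)
  have he := eu_contDiffAt σ x hx
  have him : ContDiffAt ℝ 2 (fun y : E2 => (((eu σ y ^ N).im : ℝ) : ℂ)) x :=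
    Complex.ofRealCLM.contDiff.contDiffAt.comp x
      (Complex.imCLM.contDiff.contDiffAt.comp x (he.pow N))
  unfold Wt
  exact ((hc X hX).mul (((hc α hα).neg.add ((contDiffAt_const.mul (hc E hE)).mul him)).cexp)).mul
    (he.pow n)

lemma Wt_lap (X α E X1 X2 α1 α2 E1 E2' : ℝ → ℝ) (σ : ℝ) (hσ : σ = 1 ∨ σ = -1) (n N : ℕ)
    (hX : ContDiff ℝ 2 X) (hα : ContDiff ℝ 2 α) (hE : ContDiff ℝ 2 E)
    (dX : ∀ t, HasDerivAt X (X1 t) t) (dX1 : ∀ t, HasDerivAt X1 (X2 t) t)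
    (dα : ∀ t, HasDerivAt α (α1 t) t) (dα1 : ∀ t, HasDerivAt α1 (α2 t) t)
    (dE : ∀ t, HasDerivAt E (E1 t) t) (dE1 : ∀ t, HasDerivAt E1 (E2' t) t) (t θ : ℝ) :
    lap (Wt X α E σ n N) (Psi t θ) * (Real.exp t : ℂ) ^ 2 =
      Complex.exp (wph α E σ n N t θ) *
      (X2 t + 2 * X1 t * (-α1 t + Complex.I * E1 t * Real.sin (N * (σ * θ))) +
       X t * ((-α2 t + Complex.I * E2' t * Real.sin (N * (σ * θ))) +
        (-α1 t + Complex.I * E1 t * Real.sin (N * (σ * θ))) ^ 2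
        - Complex.I * E t * N ^ 2 * Real.sin (N * (σ * θ))
        - (n + E t * N * Real.cos (N * (σ * θ))) ^ 2)) := by
  have hσ2 : (σ : ℂ) ^ 2 = 1 := by rcases hσ with rfl | rfl <;> norm_num
  have hP : Psi t θ ≠ 0 := by
    rw [← norm_pos_iff, Psi_norm]; exact Real.exp_pos t
  have hwt : ∀ s, HasDerivAt (fun s => wph α E σ n N s θ)
      (-α1 s + Complex.I * E1 s * Real.sin (N * (σ * θ))) s := by
    intro s
    have := (((dα s).ofReal_comp.fun_neg).fun_add
      (((dE s).ofReal_comp.const_mul Complex.I).mul_const (Real.sin (N * (σ * θ)) : ℂ))).add_const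
      (Complex.I * (n * (σ * θ) : ℝ))
    exact this
  have hwtt : HasDerivAt (fun s : ℝ => (-α1 s + Complex.I * E1 s * Real.sin (N * (σ * θ)) : ℂ))
      (-α2 t + Complex.I * E2' t * Real.sin (N * (σ * θ))) t := by
    exact (((dα1 t).ofReal_comp.fun_neg).fun_add
      (((dE1 t).ofReal_comp.const_mul Complex.I).mul_const (Real.sin (N * (σ * θ)) : ℂ)))
  have hlin : ∀ (M : ℕ) (s : ℝ), HasDerivAt (fun s : ℝ => (M * (σ * s) : ℝ)) (M * σ) s := by
    intro M s
    have := ((hasDerivAt_id s).const_mul σ).const_mul (M : ℝ)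
    simpa using this
  have hwθ : ∀ s, HasDerivAt (fun s => wph α E σ n N t s)
      (Complex.I * σ * (n + E t * N * Real.cos (N * (σ * s)))) s := by
    intro s
    have h1 := (((hlin N s).sin.ofReal_comp).const_mul (Complex.I * (E t : ℂ))).const_add
      (-(α t : ℂ))
    have h2 := ((hlin n s).ofReal_comp).const_mul Complex.I
    have := h1.fun_add h2
    refine this.congr_deriv ?_
    push_cast; ring
  have hwθθ : HasDerivAt (fun s : ℝ => (Complex.I * σ * (n + E t * N * Real.cos (N * (σ * s))) : ℂ))
      (-Complex.I * E t * N ^ 2 * Real.sin (N * (σ * θ))) θ := by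
    have h1 := ((((hlin N θ).cos.ofReal_comp).const_mul ((E t : ℂ) * N)).const_add
      (n : ℂ)).const_mul (Complex.I * σ)
    refine h1.congr_deriv ?_
    push_cast
    linear_combination (-Complex.I * E t * N ^ 2 * Complex.sin (N * (σ * θ))) * hσ2
  rw [lap_polar (Wt X α E σ n N) t θ (Wt_contDiffAt X α E σ n N _ hP hX hα hE)
    (fun s => (X1 s : ℂ) * Complex.exp (wph α E σ n N s θ) + (X s : ℂ) *
      (Complex.exp (wph α E σ n N s θ) * (-α1 s + Complex.I * E1 s * Real.sin (N * (σ * θ)))))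
    (fun s => (X t : ℂ) *
      (Complex.exp (wph α E σ n N t s) *
        (Complex.I * σ * (n + E t * N * Real.cos (N * (σ * s))))))
    _ _ ?_ (((dX1 t).ofReal_comp.fun_mul (hwt t).cexp).fun_add
      ((dX t).ofReal_comp.fun_mul ((hwt t).cexp.fun_mul hwtt))) ?_
      (((hwθ θ).cexp.fun_mul hwθθ).const_mul (X t : ℂ))]
  · linear_combination (Complex.exp (wph α E σ n N t θ)) * X t *
      (n + E t * N * Real.cos (N * (σ * θ))) ^ 2 *
      (σ ^ 2 * Complex.I_sq - hσ2)
  · refine Eventually.of_forall fun s => ?_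
    simp only [Wt_Psi X α E σ hσ n N]
    exact (dX s).ofReal_comp.fun_mul (hwt s).cexp
  · refine Eventually.of_forall fun s => ?_
    simp only [Wt_Psi X α E σ hσ n N]
    exact (hwθ s).cexp.const_mul (X t : ℂ)


/-- cutoff composed with the radial variable `s = exp (t/2)` -/
def cut (g : ℝ → ℝ) (e : ℝ) (t : ℝ) : ℝ := g (Real.exp (t / 2) - e)
/-- first derivative of `cut` -/
def cut1 (g : ℝ → ℝ) (e : ℝ) (t : ℝ) : ℝ := deriv g (Real.exp (t / 2) - e) * (Real.exp (t / 2) / 2)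
/-- second derivative of `cut` -/
def cut2 (g : ℝ → ℝ) (e : ℝ) (t : ℝ) : ℝ :=
  deriv (deriv g) (Real.exp (t / 2) - e) * (Real.exp (t / 2) / 2) ^ 2 +
    deriv g (Real.exp (t / 2) - e) * (Real.exp (t / 2) / 4)

lemma hexp2 (e t : ℝ) : HasDerivAt (fun t : ℝ => Real.exp (t / 2) - e) (Real.exp (t / 2) / 2) t := by
  have := (((hasDerivAt_id t).div_const 2).exp).sub_const e
  refine this.congr_deriv ?_
  simp; ring

lemma cut_contDiff (g : ℝ → ℝ) (e : ℝ) (hg : ContDiff ℝ 2 g) : ContDiff ℝ 2 (cut g e) := by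
  unfold cut
  exact hg.comp (((contDiff_id.div_const 2).exp).sub contDiff_const)

lemma cut_deriv (g : ℝ → ℝ) (e : ℝ) (hg : ContDiff ℝ 2 g) (t : ℝ) :
    HasDerivAt (cut g e) (cut1 g e t) t := by
  have h := (hg.differentiable (by norm_num)).differentiableAt (x := Real.exp (t / 2) - e)
  exact h.hasDerivAt.comp t (hexp2 e t)

lemma deriv_contDiff (g : ℝ → ℝ) (hg : ContDiff ℝ 2 g) : ContDiff ℝ 1 (deriv g) := by
  have : ContDiff ℝ (1 + 1) g := by norm_num; exact hg
  exact (contDiff_succ_iff_deriv.1 this).2.2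

lemma cut1_deriv (g : ℝ → ℝ) (e : ℝ) (hg : ContDiff ℝ 2 g) (t : ℝ) :
    HasDerivAt (cut1 g e) (cut2 g e t) t := by
  have h := ((deriv_contDiff g hg).differentiable (by norm_num)).differentiableAt
    (x := Real.exp (t / 2) - e)
  have h1 := h.hasDerivAt.comp t (hexp2 e t)
  have h2 := (hexp2 0 t).div_const 2
  simp only [sub_zero] at h2
  refine (h1.mul h2).congr_deriv ?_
  simp only [cut2, Function.comp]
  ring

lemma cut_bounds_exist (g : ℝ → ℝ) (hg : ContDiff ℝ 2 g) : ∃ M : ℝ, 1 ≤ M ∧ ∀ w, |w| ≤ 2 →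
    |g w| ≤ M ∧ |deriv g w| ≤ M ∧ |deriv (deriv g) w| ≤ M := by
  have c1 : Continuous (deriv g) := (deriv_contDiff g hg).continuous
  have c2 : Continuous (deriv (deriv g)) := (deriv_contDiff g hg).continuous_deriv (by norm_num)
  have hb : ∀ f : ℝ → ℝ, Continuous f → ∃ M, ∀ w, |w| ≤ 2 → |f w| ≤ M := by
    intro f hf
    obtain ⟨M, hM⟩ := (isCompact_Icc (a := (-2:ℝ)) (b := 2)).exists_bound_of_continuousOn
      hf.continuousOn
    exact ⟨M, fun w hw => hM w (abs_le.1 hw)⟩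
  obtain ⟨M0, h0⟩ := hb g hg.continuous
  obtain ⟨M1, h1⟩ := hb _ c1
  obtain ⟨M2, h2⟩ := hb _ c2
  refine ⟨max 1 (max M0 (max M1 M2)), le_max_left _ _, fun w hw => ⟨?_, ?_, ?_⟩⟩
  · exact (h0 w hw).trans (by simp)
  · exact (h1 w hw).trans (by simp)
  · exact (h2 w hw).trans (by simp)

/-- bounds for a cutoff -/
def CutB (g : ℝ → ℝ) (M : ℝ) : Prop := ContDiff ℝ 2 g ∧ ∀ w, |w| ≤ 2 →
    |g w| ≤ M ∧ |deriv g w| ≤ M ∧ |deriv (deriv g) w| ≤ M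

lemma cut_bounds (g : ℝ → ℝ) (M : ℝ) (hM : 1 ≤ M) (hg : CutB g M) (e t : ℝ)
    (hs : 1 ≤ Real.exp (t / 2)) (he : |Real.exp (t / 2) - e| ≤ 2) :
    |cut g e t| ≤ M ∧ |cut1 g e t| ≤ M * Real.exp (t / 2) ∧
      |cut2 g e t| ≤ M * Real.exp (t / 2) ^ 2 := by
  obtain ⟨h0, h1, h2⟩ := hg.2 _ he
  unfold cut cut1 cut2
  set s := Real.exp (t / 2)
  refine ⟨h0, ?_, ?_⟩
  · rw [abs_mul, abs_of_nonneg (by positivity : 0 ≤ s / 2)]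
    have := abs_nonneg (deriv g (s - e))
    nlinarith
  · refine (abs_add_le _ _).trans ?_
    rw [abs_mul, abs_mul, abs_of_nonneg (by positivity : 0 ≤ s / 4),
      abs_of_nonneg (by positivity : 0 ≤ (s / 2) ^ 2)]
    have a1 : |deriv (deriv g) (s - e)| * (s / 2) ^ 2 ≤ M * (s / 2) ^ 2 :=
      mul_le_mul_of_nonneg_right h2 (by positivity)
    have a2 : |deriv g (s - e)| * (s / 4) ≤ M * (s / 4) :=
      mul_le_mul_of_nonneg_right h1 (by positivity)
    have : M * s ≤ M * s ^ 2 := by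
      apply mul_le_mul_of_nonneg_left _ (by linarith); nlinarith
    nlinarith

lemma locconst_derivs (g : ℝ → ℝ) (w k : ℝ) (h : g =ᶠ[𝓝 w] fun _ => k) :
    g w = k ∧ deriv g w = 0 ∧ deriv (deriv g) w = 0 := by
  have h1 : deriv g =ᶠ[𝓝 w] fun _ => 0 := by
    have := h.deriv
    simpa using this
  refine ⟨h.eq_of_nhds, h1.eq_of_nhds, ?_⟩
  have := h1.deriv_eq
  simpa using this

lemma cut_const (g : ℝ → ℝ) (e t k : ℝ) (h : g =ᶠ[𝓝 (Real.exp (t / 2) - e)] fun _ => k) :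
    cut g e t = k ∧ cut1 g e t = 0 ∧ cut2 g e t = 0 := by
  obtain ⟨h0, h1, h2⟩ := locconst_derivs g _ k h
  simp [cut, cut1, cut2, h0, h1, h2]

/-- shape cutoff: exponent change -/
def Hc (w : ℝ) : ℝ := Real.smoothTransition (8 * w)
/-- fade-in -/
def Uc (w : ℝ) : ℝ := Real.smoothTransition (8 * w - 1)
/-- fade-out -/
def Dc (w : ℝ) : ℝ := 1 - Real.smoothTransition (8 * w - 6)

lemma Hc_cd : ContDiff ℝ 2 Hc :=
  Real.smoothTransition.contDiff.comp (contDiff_const.mul contDiff_id)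
lemma Uc_cd : ContDiff ℝ 2 Uc :=
  Real.smoothTransition.contDiff.comp ((contDiff_const.mul contDiff_id).sub contDiff_const)
lemma Dc_cd : ContDiff ℝ 2 Dc :=
  contDiff_const.sub
    (Real.smoothTransition.contDiff.comp ((contDiff_const.mul contDiff_id).sub contDiff_const))

lemma Hc_zero {w : ℝ} (h : w ≤ 0) : Hc w = 0 :=
  Real.smoothTransition.zero_of_nonpos (by linarith)
lemma Hc_one {w : ℝ} (h : 1 / 8 ≤ w) : Hc w = 1 :=
  Real.smoothTransition.one_of_one_le (by linarith)
lemma Uc_zero {w : ℝ} (h : w ≤ 1 / 8) : Uc w = 0 :=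
  Real.smoothTransition.zero_of_nonpos (by linarith)
lemma Uc_one {w : ℝ} (h : 1 / 4 ≤ w) : Uc w = 1 :=
  Real.smoothTransition.one_of_one_le (by linarith)
lemma Dc_one {w : ℝ} (h : w ≤ 3 / 4) : Dc w = 1 := by
  unfold Dc; rw [Real.smoothTransition.zero_of_nonpos (by linarith)]; ring
lemma Dc_zero {w : ℝ} (h : 7 / 8 ≤ w) : Dc w = 0 := by
  unfold Dc; rw [Real.smoothTransition.one_of_one_le (by linarith)]; ring
lemma Uc_mem (w : ℝ) : 0 ≤ Uc w ∧ Uc w ≤ 1 :=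
  ⟨Real.smoothTransition.nonneg _, Real.smoothTransition.le_one _⟩
lemma Dc_mem (w : ℝ) : 0 ≤ Dc w ∧ Dc w ≤ 1 := by
  have h1 := Real.smoothTransition.nonneg (8 * w - 6)
  have h2 := Real.smoothTransition.le_one (8 * w - 6)
  unfold Dc
  constructor <;> linarith

lemma ev_lt {g : ℝ → ℝ} {w k a : ℝ} (h : ∀ w, w ≤ a → g w = k) (hw : w < a) :
    g =ᶠ[𝓝 w] fun _ => k := by
  filter_upwards [Iio_mem_nhds hw] with y hy using h y (le_of_lt hy)
lemma ev_gt {g : ℝ → ℝ} {w k a : ℝ} (h : ∀ w, a ≤ w → g w = k) (hw : a < w) :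
    g =ᶠ[𝓝 w] fun _ => k := by
  filter_upwards [Ioi_mem_nhds hw] with y hy using h y (le_of_lt hy)

lemma cuts_M : ∃ M : ℝ, 1 ≤ M ∧ CutB Hc M ∧ CutB Uc M ∧ CutB Dc M := by
  obtain ⟨M1, h1, k1⟩ := cut_bounds_exist Hc Hc_cd
  obtain ⟨M2, h2, k2⟩ := cut_bounds_exist Uc Uc_cd
  obtain ⟨M3, h3, k3⟩ := cut_bounds_exist Dc Dc_cd
  have mono : ∀ (g : ℝ → ℝ) (M : ℝ), (∀ w : ℝ, |w| ≤ 2 → |g w| ≤ M ∧ |deriv g w| ≤ M ∧ |deriv (deriv g) w| ≤ M) →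
      M ≤ M1 + M2 + M3 → ∀ w : ℝ, |w| ≤ 2 → |g w| ≤ M1 + M2 + M3 ∧ |deriv g w| ≤ M1 + M2 + M3 ∧
        |deriv (deriv g) w| ≤ M1 + M2 + M3 := by
    intro g M h hM w hw
    obtain ⟨a, b, c⟩ := h w hw
    exact ⟨a.trans hM, b.trans hM, c.trans hM⟩
  exact ⟨M1 + M2 + M3, by linarith, ⟨Hc_cd, mono _ _ k1 (by linarith)⟩,
    ⟨Uc_cd, mono _ _ k2 (by linarith)⟩, ⟨Dc_cd, mono _ _ k3 (by linarith)⟩⟩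

set_option maxHeartbeats 2000000 in
lemma block_abs (K s X X1 X2 a1 a2 E E1 E2' S Cc n N lam a B : ℝ) (hK : 1 ≤ K) (hs : 1 ≤ s)
    (hX : |X| ≤ K) (hX1 : |X1| ≤ K * s) (hX2 : |X2| ≤ K * s ^ 2)
    (ha1 : |a1 - a * s ^ 2| ≤ K * s) (ha2 : |a2| ≤ K * s ^ 2)
    (hEN : |E * N| ≤ K * s) (hEN2 : |E * N ^ 2| ≤ K * s ^ 3)
    (hE1 : |E1| ≤ K) (hE2 : |E2'| ≤ K * s) (hS : |S| ≤ 1) (hC : |Cc| ≤ 1)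
    (hn : |n - B * s ^ 2| ≤ K * s) (ha0 : 0 ≤ a) (haK : a ≤ K) (hB0 : 0 ≤ B) (hBK : B ≤ K)
    (hab : a ^ 2 = B ^ 2 - lam) :
    ‖((X2 : ℂ) + 2 * X1 * (-a1 + Complex.I * E1 * S) +
       X * ((-a2 + Complex.I * E2' * S) + (-a1 + Complex.I * E1 * S) ^ 2
        - Complex.I * E * N ^ 2 * S - (n + E * N * Cc) ^ 2)) + lam * s ^ 4 * X‖
      ≤ 40 * K ^ 3 * s ^ 3 := by
  have hs2 : s ≤ s ^ 2 := by nlinarith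
  have hs3 : s ^ 2 ≤ s ^ 3 := by nlinarith [sq_nonneg s]
  have hs0 : 0 < s := by linarith
  have hK0 : 0 < K := by linarith
  have hK2 : K ≤ K ^ 2 := by nlinarith
  have hK3 : K ^ 2 ≤ K ^ 3 := by nlinarith [sq_nonneg K]
  have ha1' : |a1| ≤ 2 * K * s ^ 2 := by
    have : |a1| ≤ |a1 - a * s ^ 2| + |a * s ^ 2| := by
      have := abs_add_le (a1 - a * s ^ 2) (a * s ^ 2); simpa using this
    rw [abs_of_nonneg (by positivity : 0 ≤ a * s ^ 2)] at this
    have h2 : a * s ^ 2 ≤ K * s ^ 2 := mul_le_mul_of_nonneg_right haK (by positivity)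
    have h3 : K * s ≤ K * s ^ 2 := mul_le_mul_of_nonneg_left hs2 hK0.le
    linarith
  have hE1S : |E1 * S| ≤ K := by
    rw [abs_mul]; calc _ ≤ K * 1 := mul_le_mul hE1 hS (abs_nonneg _) hK0.le
      _ = K := mul_one K
  have hE2S : |E2' * S| ≤ K * s := by
    rw [abs_mul]; calc _ ≤ (K * s) * 1 := mul_le_mul hE2 hS (abs_nonneg _) (by positivity)
      _ = K * s := mul_one _
  have hENS : |E * N ^ 2 * S| ≤ K * s ^ 3 := by
    rw [abs_mul]; calc _ ≤ (K * s ^ 3) * 1 := mul_le_mul hEN2 hS (abs_nonneg _) (by positivity)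
      _ = _ := mul_one _
  have hENC : |E * N * Cc| ≤ K * s := by
    rw [abs_mul]; calc _ ≤ (K * s) * 1 := mul_le_mul hEN hC (abs_nonneg _) (by positivity)
      _ = _ := mul_one _
  -- real main part
  have hmain : |a1 ^ 2 - (n + E * N * Cc) ^ 2 + lam * s ^ 4| ≤ 11 * K ^ 2 * s ^ 3 := by
    have e : a1 ^ 2 - (n + E * N * Cc) ^ 2 + lam * s ^ 4 =
        (a1 - a * s ^ 2) * (a1 + a * s ^ 2) -
        ((n - B * s ^ 2) + E * N * Cc) * ((n - B * s ^ 2) + E * N * Cc + 2 * (B * s ^ 2)) := by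
      linear_combination (s ^ 4) * hab
    rw [e]
    refine (abs_sub _ _).trans ?_
    rw [abs_mul, abs_mul]
    have k1 : |a1 + a * s ^ 2| ≤ 3 * K * s ^ 2 := by
      refine (abs_add_le _ _).trans ?_
      rw [abs_of_nonneg (by positivity : 0 ≤ a * s ^ 2)]
      have h2 : a * s ^ 2 ≤ K * s ^ 2 := mul_le_mul_of_nonneg_right haK (by positivity)
      linarith
    have k2 : |n - B * s ^ 2 + E * N * Cc| ≤ 2 * K * s := by
      refine (abs_add_le _ _).trans ?_; linarith
    have k3 : |n - B * s ^ 2 + E * N * Cc + 2 * (B * s ^ 2)| ≤ 4 * K * s ^ 2 := by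
      refine (abs_add_le _ _).trans ?_
      rw [abs_of_nonneg (by positivity : 0 ≤ 2 * (B * s ^ 2))]
      have h2 : B * s ^ 2 ≤ K * s ^ 2 := mul_le_mul_of_nonneg_right hBK (by positivity)
      have h3 : K * s ≤ K * s ^ 2 := mul_le_mul_of_nonneg_left hs2 hK0.le
      linarith
    have := mul_le_mul ha1 k1 (abs_nonneg _) (by positivity)
    have := mul_le_mul k2 k3 (abs_nonneg _) (by positivity)
    nlinarith
  have e : ((X2 : ℂ) + 2 * X1 * (-a1 + Complex.I * E1 * S) +
       X * ((-a2 + Complex.I * E2' * S) + (-a1 + Complex.I * E1 * S) ^ 2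
        - Complex.I * E * N ^ 2 * S - (n + E * N * Cc) ^ 2)) + lam * s ^ 4 * X =
      ((X2 + 2 * X1 * (-a1) + X * (-a2 - (E1 * S) ^ 2 +
        (a1 ^ 2 - (n + E * N * Cc) ^ 2 + lam * s ^ 4)) : ℝ) : ℂ) +
      Complex.I * ((2 * X1 * (E1 * S) + X * (E2' * S - 2 * a1 * (E1 * S) - E * N ^ 2 * S) : ℝ) : ℂ) := by
    push_cast
    linear_combination (X * (E1 * S) ^ 2 : ℂ) * Complex.I_sq
  rw [e]
  refine (norm_add_le _ _).trans ?_
  rw [norm_mul, Complex.norm_I, one_mul, Complex.norm_real, Complex.norm_real, Real.norm_eq_abs,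
    Real.norm_eq_abs]
  have q1 : |X1 * a1| ≤ 2 * K ^ 2 * s ^ 3 := by
    rw [abs_mul]
    calc _ ≤ (K * s) * (2 * K * s ^ 2) := mul_le_mul hX1 ha1' (abs_nonneg _) (by positivity)
      _ = _ := by ring
  have q2 : |-a2 - (E1 * S) ^ 2 + (a1 ^ 2 - (n + E * N * Cc) ^ 2 + lam * s ^ 4)|
      ≤ 13 * K ^ 2 * s ^ 3 := by
    refine (abs_add_le _ _).trans ?_
    have : |-a2 - (E1 * S) ^ 2| ≤ K * s ^ 2 + K ^ 2 := by
      refine (abs_sub _ _).trans ?_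
      rw [abs_neg, abs_pow]
      have := pow_le_pow_left₀ (abs_nonneg _) hE1S 2
      linarith
    have h1 : K * s ^ 2 ≤ K ^ 2 * s ^ 3 := mul_le_mul hK2 hs3 (by positivity) (by positivity)
    have h2 : K ^ 2 * 1 ≤ K ^ 2 * s ^ 3 := by
      apply mul_le_mul_of_nonneg_left _ (by positivity); nlinarith
    linarith
  have q3 : |X * (-a2 - (E1 * S) ^ 2 + (a1 ^ 2 - (n + E * N * Cc) ^ 2 + lam * s ^ 4))|
      ≤ 13 * K ^ 3 * s ^ 3 := by
    rw [abs_mul]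
    calc _ ≤ K * (13 * K ^ 2 * s ^ 3) := mul_le_mul hX q2 (abs_nonneg _) (by positivity)
      _ = _ := by ring
  have q4 : |X1 * (E1 * S)| ≤ K ^ 2 * s := by
    rw [abs_mul]
    calc _ ≤ (K * s) * K := mul_le_mul hX1 hE1S (abs_nonneg _) (by positivity)
      _ = _ := by ring
  have q5 : |E2' * S - 2 * a1 * (E1 * S) - E * N ^ 2 * S| ≤ 6 * K ^ 2 * s ^ 3 := by
    have h1 : |a1 * (E1 * S)| ≤ 2 * K ^ 2 * s ^ 2 := by
      rw [abs_mul]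
      calc _ ≤ (2 * K * s ^ 2) * K := mul_le_mul ha1' hE1S (abs_nonneg _) (by positivity)
        _ = _ := by ring
    have h2 : K * s ≤ K ^ 2 * s ^ 3 :=
      mul_le_mul hK2 (hs2.trans hs3) (by positivity) (by positivity)
    have h3 : K ^ 2 * s ^ 2 ≤ K ^ 2 * s ^ 3 := mul_le_mul_of_nonneg_left hs3 (by positivity)
    have h4 : K * s ^ 3 ≤ K ^ 2 * s ^ 3 := mul_le_mul_of_nonneg_right hK2 (by positivity)
    have A1 := abs_sub (E2' * S - 2 * a1 * (E1 * S)) (E * N ^ 2 * S)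
    have A2 := abs_sub (E2' * S) (2 * a1 * (E1 * S))
    have A3 : |2 * a1 * (E1 * S)| = 2 * |a1 * (E1 * S)| := by rw [mul_assoc, abs_mul, abs_two]
    linarith
  have q6 : |X * (E2' * S - 2 * a1 * (E1 * S) - E * N ^ 2 * S)| ≤ 6 * K ^ 3 * s ^ 3 := by
    rw [abs_mul]
    calc _ ≤ K * (6 * K ^ 2 * s ^ 3) := mul_le_mul hX q5 (abs_nonneg _) (by positivity)
      _ = _ := by ring
  have r1 : K * s ^ 2 ≤ K ^ 3 * s ^ 3 := mul_le_mul (hK2.trans hK3) hs3 (by positivity) (by positivity)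
  have r2 : K ^ 2 * s ^ 3 ≤ K ^ 3 * s ^ 3 := mul_le_mul_of_nonneg_right hK3 (by positivity)
  have r3 : K ^ 2 * s ≤ K ^ 3 * s ^ 3 := mul_le_mul hK3 (hs2.trans hs3) (by positivity) (by positivity)
  have r4 : 0 < K ^ 3 * s ^ 3 := by positivity
  have f1 : |X2 + 2 * X1 * (-a1) + X * (-a2 - (E1 * S) ^ 2 +
        (a1 ^ 2 - (n + E * N * Cc) ^ 2 + lam * s ^ 4))| ≤ 18 * K ^ 3 * s ^ 3 := by
    have e1 : X2 + 2 * X1 * (-a1) + X * (-a2 - (E1 * S) ^ 2 +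
        (a1 ^ 2 - (n + E * N * Cc) ^ 2 + lam * s ^ 4)) = X2 - 2 * (X1 * a1) +
        X * (-a2 - (E1 * S) ^ 2 + (a1 ^ 2 - (n + E * N * Cc) ^ 2 + lam * s ^ 4)) := by ring
    rw [e1]
    have A1 := abs_add_le (X2 - 2 * (X1 * a1))
      (X * (-a2 - (E1 * S) ^ 2 + (a1 ^ 2 - (n + E * N * Cc) ^ 2 + lam * s ^ 4)))
    have A2 := abs_sub X2 (2 * (X1 * a1))
    have A3 : |2 * (X1 * a1)| = 2 * |X1 * a1| := by rw [abs_mul, abs_two]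
    linarith
  have f2 : |2 * X1 * (E1 * S) + X * (E2' * S - 2 * a1 * (E1 * S) - E * N ^ 2 * S)|
      ≤ 8 * K ^ 3 * s ^ 3 := by
    have A1 := abs_add_le (2 * X1 * (E1 * S)) (X * (E2' * S - 2 * a1 * (E1 * S) - E * N ^ 2 * S))
    have A3 : |2 * X1 * (E1 * S)| = 2 * |X1 * (E1 * S)| := by rw [mul_assoc, abs_mul, abs_two]
    linarith
  linarith


/-- exponent of block `j` in transition `j` -/
def pE (B : ℕ) (τ j : ℝ) : ℝ := B / 2 * (τ * (2 * j ^ 2 - 2 * j - 1) + (2 * j + 1) / τ)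
/-- exponent of block `j+1` in transition `j` -/
def qE (B : ℕ) (τ j : ℝ) : ℝ := B / 2 * (τ * (2 * j ^ 2 - 2 * j - 1) - (2 * j + 1) / τ)
/-- incoming exponent of block `i` -/
def qB (B : ℕ) (τ : ℝ) (i : ℕ) : ℝ := if i = 10 then -(100 * B) else qE B τ ((i : ℝ) - 1)
/-- phase modulation strength -/
def epsB (i : ℕ) : ℝ :=
  if i = 10 then 0 else 2 * (2 * ((i : ℝ) - 1) + 1) / (((i : ℝ) - 1) ^ 2 + (i : ℝ) ^ 2)
/-- angular frequency -/
def nB (B i : ℕ) : ℕ := B * i ^ 2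
/-- modulation frequency -/
def NB (B i : ℕ) : ℕ := B * ((i - 1) ^ 2 + i ^ 2)
/-- orientation -/
def sg (i : ℕ) : ℝ := (-1) ^ i
/-- growth of the exponent over one block -/
def gB (B : ℕ) (τ : ℝ) (j : ℕ) : ℝ :=
  pE B τ j * (2 * Real.log (j + 1 / 2) - 2 * Real.log j) +
    qE B τ j * (2 * Real.log (j + 1) - 2 * Real.log (j + 1 / 2))
/-- exponent offset -/
def cB (B : ℕ) (τ : ℝ) (i : ℕ) : ℝ := ∑ j ∈ Finset.range i, gB B τ j
/-- jump of exponent -/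
def dB (B : ℕ) (τ : ℝ) (i : ℕ) : ℝ := pE B τ i - qB B τ i
/-- decay exponent -/
def aB (B : ℕ) (τ : ℝ) (i : ℕ) (t : ℝ) : ℝ :=
  cB B τ i + (t - 2 * Real.log i) * (qB B τ i + dB B τ i * cut Hc i t)
/-- its derivative -/
def aB1 (B : ℕ) (τ : ℝ) (i : ℕ) (t : ℝ) : ℝ :=
  qB B τ i + dB B τ i * cut Hc i t + (t - 2 * Real.log i) * (dB B τ i * cut1 Hc i t)
/-- its second derivative -/
def aB2 (B : ℕ) (τ : ℝ) (i : ℕ) (t : ℝ) : ℝ :=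
  2 * (dB B τ i * cut1 Hc i t) + (t - 2 * Real.log i) * (dB B τ i * cut2 Hc i t)
/-- phase modulation -/
def EB (i : ℕ) (t : ℝ) : ℝ := epsB i * (1 - cut Hc i t)
/-- derivative -/
def EB1 (i : ℕ) (t : ℝ) : ℝ := -(epsB i * cut1 Hc i t)
/-- second derivative -/
def EB2 (i : ℕ) (t : ℝ) : ℝ := -(epsB i * cut2 Hc i t)

lemma sg_mem (i : ℕ) : sg i = 1 ∨ sg i = -1 := neg_one_pow_eq_or ℝ i

lemma aB_cd (B : ℕ) (τ : ℝ) (i : ℕ) : ContDiff ℝ 2 (aB B τ i) := by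
  have := cut_contDiff Hc i Hc_cd
  unfold aB
  exact contDiff_const.add ((contDiff_id.sub contDiff_const).mul
    (contDiff_const.add (contDiff_const.mul this)))
lemma EB_cd (i : ℕ) : ContDiff ℝ 2 (EB i) := by
  have := cut_contDiff Hc i Hc_cd
  unfold EB
  exact contDiff_const.mul (contDiff_const.sub this)
lemma aB_d (B : ℕ) (τ : ℝ) (i : ℕ) (t : ℝ) : HasDerivAt (aB B τ i) (aB1 B τ i t) t := by
  have h := cut_deriv Hc i Hc_cd t
  have := ((((hasDerivAt_id t).sub_const (2 * Real.log i)).mul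
    ((h.const_mul (dB B τ i)).const_add (qB B τ i))).const_add (cB B τ i))
  refine this.congr_deriv ?_
  simp [aB1]
lemma aB1_d (B : ℕ) (τ : ℝ) (i : ℕ) (t : ℝ) : HasDerivAt (aB1 B τ i) (aB2 B τ i t) t := by
  have h := cut_deriv Hc i Hc_cd t
  have h1 := cut1_deriv Hc i Hc_cd t
  have := ((h.const_mul (dB B τ i)).const_add (qB B τ i)).add
    (((hasDerivAt_id t).sub_const (2 * Real.log i)).mul (h1.const_mul (dB B τ i)))
  refine this.congr_deriv ?_
  simp [aB2]; ring
lemma EB_d (i : ℕ) (t : ℝ) : HasDerivAt (EB i) (EB1 i t) t := by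
  have h := cut_deriv Hc i Hc_cd t
  refine ((h.const_sub 1).const_mul (epsB i)).congr_deriv ?_
  simp [EB1]
lemma EB1_d (i : ℕ) (t : ℝ) : HasDerivAt (EB1 i) (EB2 i t) t := by
  have h := cut1_deriv Hc i Hc_cd t
  exact ((h.const_mul (epsB i))).fun_neg

/-- block -/
def vB (B : ℕ) (τ : ℝ) (X : ℝ → ℝ) (i : ℕ) : E2 → ℂ :=
  Wt X (aB B τ i) (EB i) (sg i) (nB B i) (NB B i)
/-- log-polar exponential of a block -/
def eB (B : ℕ) (τ : ℝ) (i : ℕ) (t θ : ℝ) : ℂ :=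
  Complex.exp (wph (aB B τ i) (EB i) (sg i) (nB B i) (NB B i) t θ)

lemma vB_Psi (B : ℕ) (τ : ℝ) (X : ℝ → ℝ) (i : ℕ) (t θ : ℝ) :
    vB B τ X i (Psi t θ) = X t * eB B τ i t θ := Wt_Psi _ _ _ _ (sg_mem i) _ _ _ _
lemma eB_norm (B : ℕ) (τ : ℝ) (i : ℕ) (t θ : ℝ) : ‖eB B τ i t θ‖ = Real.exp (-(aB B τ i t)) :=
  norm_exp_wph _ _ _ _ _ _ _

/-- parameter conditions -/
structure Par (B : ℕ) (τ lam : ℝ) : Prop where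
  hB : 4 ≤ B
  h1 : τ ≤ 1
  h2 : 7 / 10 ≤ τ
  hab : (τ * B) ^ 2 = (B : ℝ) ^ 2 - lam

lemma tau_inv {B : ℕ} {τ lam : ℝ} (P : Par B τ lam) : 1 ≤ 1 / τ ∧ 1 / τ ≤ 3 / 2 := by
  have := P.h1; have := P.h2
  have h0 : 0 < τ := by linarith
  constructor
  · rw [le_div_iff₀ h0]; linarith
  · rw [div_le_iff₀ h0]; linarith

lemma pE_near {B : ℕ} {τ lam : ℝ} (P : Par B τ lam) (i : ℝ) (hi : 10 ≤ i) :
    |pE B τ i - τ * B * i ^ 2| ≤ 3 * B * i := by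
  obtain ⟨t1, t2⟩ := tau_inv P
  have e : pE B τ i - τ * B * i ^ 2 = B / 2 * ((2 * i + 1) * (1 / τ - τ)) := by
    unfold pE; ring
  have hB : (0:ℝ) ≤ B := by positivity
  have h1 := P.h1
  have h2 := P.h2
  rw [e, abs_of_nonneg (by apply mul_nonneg (by positivity); apply mul_nonneg <;> linarith)]
  have : (2 * i + 1) * (1 / τ - τ) ≤ (2 * i + 1) * 1 :=
    mul_le_mul_of_nonneg_left (by linarith) (by linarith)
  have : B / 2 * ((2 * i + 1) * (1 / τ - τ)) ≤ B / 2 * (6 * i) :=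
    mul_le_mul_of_nonneg_left (by linarith) (by positivity)
  linarith

lemma qB_near {B : ℕ} {τ lam : ℝ} (P : Par B τ lam) (i : ℕ) (hi : 10 ≤ i) :
    |qB B τ i - τ * B * i ^ 2| ≤ 20 * B * i := by
  obtain ⟨t1, t2⟩ := tau_inv P
  have hB : (0:ℝ) ≤ B := by positivity
  have h1 := P.h1
  have h2 := P.h2
  have hi' : (10:ℝ) ≤ i := by exact_mod_cast hi
  unfold qB
  split_ifs with h
  · subst h
    push_cast
    rw [abs_le]
    constructor <;> nlinarith
  · have e : qE B τ ((i:ℝ) - 1) - τ * B * i ^ 2 =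
      -(B / 2 * ((6 * i - 3) * τ + (2 * i - 1) * (1 / τ))) := by
      unfold qE; ring
    rw [e, abs_neg, abs_of_nonneg (by
      apply mul_nonneg (by positivity)
      apply add_nonneg <;> apply mul_nonneg <;> linarith)]
    have a1 : (6 * i - 3) * τ ≤ (6 * i - 3) * 1 := mul_le_mul_of_nonneg_left h1 (by linarith)
    have a2 : (2 * i - 1) * (1 / τ) ≤ (2 * i - 1) * (3 / 2) := mul_le_mul_of_nonneg_left t2 (by linarith)
    have : B / 2 * ((6 * i - 3) * τ + (2 * i - 1) * (1 / τ)) ≤ B / 2 * (40 * i) :=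
      mul_le_mul_of_nonneg_left (by linarith) (by positivity)
    linarith

lemma dB_le {B : ℕ} {τ lam : ℝ} (P : Par B τ lam) (i : ℕ) (hi : 10 ≤ i) :
    |dB B τ i| ≤ 25 * B * i := by
  have h1 := pE_near P i (by exact_mod_cast hi)
  have h2 := qB_near P i hi
  unfold dB
  have : (0:ℝ) ≤ B * i := by positivity
  rw [abs_le] at *
  constructor <;> linarith

lemma eps_le (i : ℕ) (hi : 10 ≤ i) : 0 ≤ epsB i ∧ epsB i * i ≤ 3 := by
  have hi' : (10:ℝ) ≤ i := by exact_mod_cast hi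
  unfold epsB
  split_ifs with h
  · simp
  · constructor
    · apply div_nonneg <;> nlinarith
    · rw [div_mul_eq_mul_div, div_le_iff₀ (by nlinarith)]
      nlinarith

lemma NB_cast (B i : ℕ) (hi : 10 ≤ i) : (NB B i : ℝ) = B * (((i:ℝ) - 1) ^ 2 + (i:ℝ) ^ 2) := by
  unfold NB; push_cast [Nat.cast_sub (by omega : 1 ≤ i)]; ring

lemma NB_le (B i : ℕ) (hi : 10 ≤ i) : (NB B i : ℝ) ≤ 2 * B * i ^ 2 := by
  rw [NB_cast B i hi]
  have hi' : (10:ℝ) ≤ i := by exact_mod_cast hi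
  have : (B:ℝ) * (((i:ℝ) - 1) ^ 2 + (i:ℝ) ^ 2) ≤ B * (2 * i ^ 2) :=
    mul_le_mul_of_nonneg_left (by nlinarith) (by positivity)
  linarith

lemma log_near (s i : ℝ) (hs : 1 ≤ s) (hi : 10 ≤ i) (h : |s - i| ≤ 1) :
    |2 * Real.log s - 2 * Real.log i| ≤ 4 / s := by
  have hi0 : 0 < i := by linarith
  have hs0 : 0 < s := by linarith
  rw [abs_le] at h
  have e : 2 * Real.log s - 2 * Real.log i = 2 * Real.log (s / i) := by
    rw [Real.log_div hs0.ne' hi0.ne']; ring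
  have e2 : 2 * Real.log s - 2 * Real.log i = -(2 * Real.log (i / s)) := by
    rw [Real.log_div hi0.ne' hs0.ne']; ring
  rw [abs_le]
  constructor
  · rw [e2]
    have := Real.log_le_sub_one_of_pos (div_pos hi0 hs0)
    have h3 : i / s - 1 ≤ 2 / s := by
      rw [sub_le_iff_le_add, div_le_iff₀ hs0, add_mul, div_mul_cancel₀ _ hs0.ne']; linarith
    have h4 : 4 / s = 2 * (2 / s) := by ring
    linarith
  · rw [e]
    have := Real.log_le_sub_one_of_pos (div_pos hs0 hi0)
    have h3 : s / i - 1 ≤ 2 / s := by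
      rw [div_sub_one hi0.ne', div_le_div_iff₀ hi0 hs0]; nlinarith
    have h4 : 4 / s = 2 * (2 / s) := by ring
    linarith


/-- the overall block constant -/
def KB (B : ℕ) (M : ℝ) : ℝ := 20 * (25 * B) ^ 3 * M

lemma KB_ge (B : ℕ) (hB : 4 ≤ B) (M : ℝ) (hM : 1 ≤ M) : 1 ≤ KB B M := by
  unfold KB
  have h : (4:ℝ) ≤ B := by exact_mod_cast hB
  have : (1:ℝ) ≤ (25 * B) ^ 3 := one_le_pow₀ (by linarith)
  nlinarith

lemma abs_mul_le {x y a b : ℝ} (hx : |x| ≤ a) (hy : |y| ≤ b) : |x * y| ≤ a * b := by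
  rw [abs_mul]; exact mul_le_mul hx hy (abs_nonneg _) ((abs_nonneg _).trans hx)

set_option maxHeartbeats 4000000 in
lemma blockA {B : ℕ} {τ lam : ℝ} (P : Par B τ lam) (M : ℝ) (hM : 1 ≤ M) (hH : CutB Hc M)
    (g : ℝ → ℝ) (hg : CutB g M) (e : ℝ) (i : ℕ) (hi : 10 ≤ i) (t θ : ℝ)
    (hsi : |Real.exp (t / 2) - i| ≤ 1) (hse : |Real.exp (t / 2) - e| ≤ 2) :
    ‖lap (vB B τ (cut g e) i) (Psi t θ) * (Real.exp t : ℂ) ^ 2 +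
      lam * (Real.exp (t / 2) : ℂ) ^ 4 * (cut g e t * eB B τ i t θ)‖ ≤
      40 * KB B M ^ 3 * Real.exp (t / 2) ^ 3 * Real.exp (-(aB B τ i t)) := by
  have hi' : (10:ℝ) ≤ i := by exact_mod_cast hi
  have hW := Wt_lap (cut g e) (aB B τ i) (EB i) (cut1 g e) (cut2 g e) (aB1 B τ i) (aB2 B τ i)
    (EB1 i) (EB2 i) (sg i) (sg_mem i) (nB B i) (NB B i) (cut_contDiff g e hg.1) (aB_cd B τ i)
    (EB_cd i) (cut_deriv g e hg.1) (cut1_deriv g e hg.1) (aB_d B τ i) (aB1_d B τ i) (EB_d i)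
    (EB1_d i) t θ
  have ht : t = 2 * Real.log (Real.exp (t / 2)) := by rw [Real.log_exp]; ring
  have hs1 : 1 ≤ Real.exp (t / 2) := by rw [abs_le] at hsi; linarith
  obtain ⟨X0, X1, X2⟩ := cut_bounds g M hM hg e t hs1 hse
  obtain ⟨H0, H1, H2⟩ := cut_bounds Hc M hM hH i t hs1 (hsi.trans (by norm_num))
  have hlog := log_near (Real.exp (t / 2)) i hs1 hi' hsi
  rw [← ht] at hlog
  have hS : |Real.sin (NB B i * (sg i * θ))| ≤ 1 := Real.abs_sin_le_one _
  have hC : |Real.cos (NB B i * (sg i * θ))| ≤ 1 := Real.abs_cos_le_one _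
  unfold vB
  rw [hW]
  have e0 : ∀ (A L s4 X : ℂ), eB B τ i t θ * A + L * s4 * (X * eB B τ i t θ) =
      eB B τ i t θ * (A + L * s4 * X) := by intros; ring
  rw [show Complex.exp (wph (aB B τ i) (EB i) (sg i) (nB B i) (NB B i) t θ) = eB B τ i t θ from rfl,
    e0, norm_mul, eB_norm, mul_comm]
  refine mul_le_mul_of_nonneg_right ?_ (Real.exp_pos _).le
  set s := Real.exp (t / 2)
  have hs0 : 0 < s := by linarith
  rw [abs_le] at hsi
  have his : (i:ℝ) ≤ 2 * s := by linarith
  have hsi2 : s ≤ 2 * i := by linarith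
  have hK : (1:ℝ) ≤ 25 * B := by have : (4:ℝ) ≤ B := by exact_mod_cast P.hB
                                 linarith
  have hq := qB_near P i hi
  have hd := dB_le P i hi
  obtain ⟨ep0, ep1⟩ := eps_le i hi
  have hN := NB_le B i hi
  have hB0 : (0:ℝ) ≤ B := by positivity
  have h1 := P.h1
  have h2 := P.h2
  have hM0 : 0 < M := by linarith
  have hKM := KB_ge B P.hB M hM
  have hBk : (B:ℝ) ≤ 25 * B := by linarith
  have hdK : |dB B τ i| ≤ 2 * (25 * B) * s := by
    refine hd.trans ?_
    have : 25 * (B:ℝ) * i ≤ 25 * B * (2 * s) := mul_le_mul_of_nonneg_left his (by linarith)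
    linarith
  have hq2 : |qB B τ i - τ * B * i ^ 2| ≤ 2 * (25 * B) * s := by
    refine hq.trans ?_
    have : 20 * (B:ℝ) * i ≤ 20 * B * (2 * s) := mul_le_mul_of_nonneg_left his (by linarith)
    nlinarith
  have hepsN : epsB i * NB B i ≤ 12 * B * s := by
    calc epsB i * NB B i ≤ epsB i * (2 * B * i ^ 2) := mul_le_mul_of_nonneg_left hN ep0
      _ = (epsB i * i) * (2 * B * i) := by ring
      _ ≤ 3 * (2 * B * (2 * s)) := by
        apply mul_le_mul ep1 _ (by positivity) (by norm_num)
        exact mul_le_mul_of_nonneg_left his (by positivity)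
      _ = _ := by ring
  have hN2 : (NB B i : ℝ) ≤ 8 * B * s ^ 2 := by
    refine hN.trans ?_
    have : (i:ℝ) ^ 2 ≤ (2 * s) ^ 2 := pow_le_pow_left₀ (by positivity) his 2
    nlinarith
  have hB20 : (B:ℝ) * (i ^ 2 - s ^ 2) = B * ((i - s) * (i + s)) := by ring
  have hsq : |(i:ℝ) ^ 2 - s ^ 2| ≤ 3 * s := by
    rw [show (i:ℝ) ^ 2 - s ^ 2 = (i - s) * (i + s) by ring]
    calc _ ≤ 1 * (3 * s) := abs_mul_le (by rw [abs_le]; constructor <;> linarith)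
          (by rw [abs_of_nonneg (by linarith)]; linarith)
      _ = _ := one_mul _
  have hepss : epsB i * s ≤ 6 := by nlinarith
  have heps1 : epsB i ≤ 1 := by nlinarith
  clear_value s
  -- abbreviations
  have hk0 : KB B M = 20 * (25 * B) ^ 3 * M := rfl
  generalize hKK : KB B M = K at *
  generalize hkk : (25 * (B:ℝ)) = k at *
  have kk3 : k ≤ k ^ 3 := by nlinarith [sq_nonneg k]
  have kk2 : k ≤ k ^ 2 := by nlinarith [sq_nonneg k]
  have kk23 : k ^ 2 ≤ k ^ 3 := by nlinarith [sq_nonneg k]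
  have kM : k * M ≤ k ^ 3 * M := mul_le_mul_of_nonneg_right kk3 hM0.le
  have k2M : k ^ 2 * M ≤ k ^ 3 * M := mul_le_mul_of_nonneg_right kk23 hM0.le
  have k1M : 1 * M ≤ k ^ 3 * M := mul_le_mul_of_nonneg_right (by linarith) hM0.le
  have kkM : k ^ 3 * 1 ≤ k ^ 3 * M := mul_le_mul_of_nonneg_left hM (by positivity)
  have kM' : k * 1 ≤ k * M := mul_le_mul_of_nonneg_left hM (by positivity)
  have hcut1 : |1 - cut Hc i t| ≤ 2 * M := by
    have := abs_sub 1 (cut Hc i t); rw [abs_one] at this; linarith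
  have r := block_abs K s (cut g e t) (cut1 g e t) (cut2 g e t) (aB1 B τ i t) (aB2 B τ i t)
    (EB i t) (EB1 i t) (EB2 i t) (Real.sin (NB B i * (sg i * θ))) (Real.cos (NB B i * (sg i * θ)))
    (nB B i) (NB B i) lam (τ * B) B hKM hs1 ?_ ?_ ?_ ?_ ?_ ?_ ?_ ?_ ?_ hS hC ?_ (by positivity) ?_
    hB0 ?_ P.hab
  · exact_mod_cast r
  · linarith
  · exact X1.trans (mul_le_mul_of_nonneg_right (by linarith) hs0.le)
  · exact X2.trans (mul_le_mul_of_nonneg_right (by linarith) (by positivity))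
  · have e1 : aB1 B τ i t - τ * B * s ^ 2 = (qB B τ i - τ * B * i ^ 2) +
      (τ * B) * ((i:ℝ) ^ 2 - s ^ 2) + dB B τ i * cut Hc i t +
      (t - 2 * Real.log i) * (dB B τ i * cut1 Hc i t) := by unfold aB1; ring
    rw [e1]
    have b1 : |(τ * B) * ((i:ℝ) ^ 2 - s ^ 2)| ≤ k * (3 * s) := by
      apply abs_mul_le _ hsq
      rw [abs_of_nonneg (by positivity)]; nlinarith
    have b2 := abs_mul_le hdK H0
    have b3 := abs_mul_le hlog (abs_mul_le hdK H1)
    have b4 : 4 / s * (2 * k * s * (M * s)) = 8 * (k * M) * s := by field_simp; ring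
    rw [b4] at b3
    have c1 := abs_add_le (qB B τ i - τ * B * i ^ 2 + (τ * B) * ((i:ℝ) ^ 2 - s ^ 2) + dB B τ i * cut Hc i t) ((t - 2 * Real.log i) * (dB B τ i * cut1 Hc i t))
    have c2 := abs_add_le (qB B τ i - τ * B * i ^ 2 + (τ * B) * ((i:ℝ) ^ 2 - s ^ 2)) (dB B τ i * cut Hc i t)
    have c3 := abs_add_le (qB B τ i - τ * B * i ^ 2) ((τ * B) * ((i:ℝ) ^ 2 - s ^ 2))
    have f : (15 * (k * M)) * s ≤ K * s := mul_le_mul_of_nonneg_right (by linarith) hs0.le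
    have f2 : (k * 1) * s ≤ (k * M) * s := mul_le_mul_of_nonneg_right kM' hs0.le
    linarith
  · unfold aB2
    have b2 := abs_mul_le hdK H1
    have b3 := abs_mul_le hlog (abs_mul_le hdK H2)
    have b4 : 4 / s * (2 * k * s * (M * s ^ 2)) = 8 * (k * M) * s ^ 2 := by field_simp; ring
    rw [b4] at b3
    have c1 := abs_add_le (2 * (dB B τ i * cut1 Hc i t)) ((t - 2 * Real.log i) * (dB B τ i * cut2 Hc i t))
    have c2 : |2 * (dB B τ i * cut1 Hc i t)| = 2 * |dB B τ i * cut1 Hc i t| := by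
      rw [abs_mul, abs_two]
    have f : (15 * (k * M)) * s ^ 2 ≤ K * s ^ 2 :=
      mul_le_mul_of_nonneg_right (by linarith) (by positivity)
    have f2 : 0 ≤ (k * M) * s ^ 2 := by positivity
    have f3 : 2 * k * s * (M * s) = 2 * ((k * M) * s ^ 2) := by ring
    rw [f3] at b2
    linarith
  · have : EB i t * NB B i = (epsB i * NB B i) * (1 - cut Hc i t) := by unfold EB; ring
    rw [this]
    refine (abs_mul_le (a := 12 * B * s) (by rwa [abs_of_nonneg (by positivity)]) hcut1).trans ?_
    have f2 : (20 * (k * M)) * s ≤ K * s := mul_le_mul_of_nonneg_right (by linarith) hs0.le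
    have f3 : 0 ≤ (B * M) * s := by positivity
    have f4 : k * M * s = 25 * ((B * M) * s) := by rw [← hkk]; ring
    linarith
  · have : EB i t * (NB B i:ℝ) ^ 2 = (epsB i * NB B i) * NB B i * (1 - cut Hc i t) := by unfold EB; ring
    rw [this]
    refine (abs_mul_le (abs_mul_le (a := 12 * B * s) (b := 8 * B * s ^ 2)
      (by rwa [abs_of_nonneg (by positivity)]) (by rwa [abs_of_nonneg (by positivity)])) hcut1).trans ?_
    have f2 : (20 * (k ^ 2 * M)) * s ^ 3 ≤ K * s ^ 3 :=
      mul_le_mul_of_nonneg_right (by linarith) (by positivity)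
    have f4 : k ^ 2 * M * s ^ 3 = 625 * ((B ^ 2 * M) * s ^ 3) := by rw [← hkk]; ring
    have f3 : 0 ≤ (B ^ 2 * M) * s ^ 3 := by positivity
    have f5 : 12 * B * s * (8 * B * s ^ 2) * (2 * M) = 192 * ((B ^ 2 * M) * s ^ 3) := by ring
    rw [f5]
    linarith
  · unfold EB1
    rw [abs_neg]
    refine (abs_mul_le (a := epsB i) (by rw [abs_of_nonneg ep0]) H1).trans ?_
    have : epsB i * (M * s) = M * (epsB i * s) := by ring
    have f : M * (epsB i * s) ≤ M * 6 := mul_le_mul_of_nonneg_left hepss hM0.le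
    linarith
  · unfold EB2
    rw [abs_neg]
    refine (abs_mul_le (a := epsB i) (by rw [abs_of_nonneg ep0]) H2).trans ?_
    have : epsB i * (M * s ^ 2) = M * s * (epsB i * s) := by ring
    have f : M * s * (epsB i * s) ≤ M * s * 6 := mul_le_mul_of_nonneg_left hepss (by positivity)
    have f2 : (20 * (1 * M)) * s ≤ K * s := mul_le_mul_of_nonneg_right (by linarith) hs0.le
    have f3 : 0 ≤ M * s := by positivity
    linarith
  · have : (nB B i : ℝ) - B * s ^ 2 = B * (i ^ 2 - s ^ 2) := by unfold nB; push_cast; ring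
    rw [this]
    refine (abs_mul_le (a := k) (by rw [abs_of_nonneg hB0]; exact hBk) hsq).trans ?_
    have f2 : (20 * (k * 1)) * s ≤ K * s := mul_le_mul_of_nonneg_right (by linarith) hs0.le
    have f3 : 0 ≤ k * s := by positivity
    linarith
  · have : τ * B ≤ 1 * B := mul_le_mul_of_nonneg_right h1 hB0
    linarith
  · linarith


/-- local solution -/
def fB (B : ℕ) (τ : ℝ) (j : ℕ) (x : E2) : ℂ :=
  vB B τ (cut Dc j) j x + vB B τ (cut Uc j) (j + 1) x

lemma Psi_ne (t θ : ℝ) : Psi t θ ≠ 0 := by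
  rw [← norm_pos_iff, Psi_norm]; exact Real.exp_pos t

lemma vB_cd (B : ℕ) (τ : ℝ) (g : ℝ → ℝ) (e : ℝ) (hg : ContDiff ℝ 2 g) (i : ℕ) (x : E2) (hx : x ≠ 0) :
    ContDiffAt ℝ 2 (vB B τ (cut g e) i) x :=
  Wt_contDiffAt _ _ _ _ _ _ x hx (cut_contDiff g e hg) (aB_cd B τ i) (EB_cd i)

lemma vB_lap (B : ℕ) (τ : ℝ) (g : ℝ → ℝ) (e : ℝ) (hg : ContDiff ℝ 2 g) (i : ℕ) (t θ : ℝ) :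
    lap (vB B τ (cut g e) i) (Psi t θ) * (Real.exp t : ℂ) ^ 2 = eB B τ i t θ *
      (cut2 g e t + 2 * cut1 g e t * (-aB1 B τ i t + Complex.I * EB1 i t * Real.sin (NB B i * (sg i * θ))) +
       cut g e t * ((-aB2 B τ i t + Complex.I * EB2 i t * Real.sin (NB B i * (sg i * θ))) +
        (-aB1 B τ i t + Complex.I * EB1 i t * Real.sin (NB B i * (sg i * θ))) ^ 2
        - Complex.I * EB i t * NB B i ^ 2 * Real.sin (NB B i * (sg i * θ))
        - (nB B i + EB i t * NB B i * Real.cos (NB B i * (sg i * θ))) ^ 2)) :=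
  Wt_lap (cut g e) (aB B τ i) (EB i) (cut1 g e) (cut2 g e) (aB1 B τ i) (aB2 B τ i)
    (EB1 i) (EB2 i) (sg i) (sg_mem i) (nB B i) (NB B i) (cut_contDiff g e hg) (aB_cd B τ i)
    (EB_cd i) (cut_deriv g e hg) (cut1_deriv g e hg) (aB_d B τ i) (aB1_d B τ i) (EB_d i)
    (EB1_d i) t θ

lemma vB_lap_zero (B : ℕ) (τ : ℝ) (g : ℝ → ℝ) (e : ℝ) (hg : ContDiff ℝ 2 g) (i : ℕ) (t θ : ℝ)
    (h : g =ᶠ[𝓝 (Real.exp (t / 2) - e)] fun _ => 0) :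
    lap (vB B τ (cut g e) i) (Psi t θ) * (Real.exp t : ℂ) ^ 2 = 0 := by
  obtain ⟨h0, h1, h2⟩ := cut_const g e t 0 h
  rw [vB_lap B τ g e hg, h0, h1, h2]
  simp

lemma fB_lap (B : ℕ) (τ : ℝ) (j : ℕ) (t θ : ℝ) :
    lap (fB B τ j) (Psi t θ) * (Real.exp t : ℂ) ^ 2 =
      lap (vB B τ (cut Dc j) j) (Psi t θ) * (Real.exp t : ℂ) ^ 2 +
      lap (vB B τ (cut Uc j) (j + 1)) (Psi t θ) * (Real.exp t : ℂ) ^ 2 := by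
  rw [← add_mul, ← lap_add (vB_cd _ _ _ _ Dc_cd _ _ (Psi_ne t θ)) (vB_cd _ _ _ _ Uc_cd _ _ (Psi_ne t θ))]
  rfl

lemma fB_Psi (B : ℕ) (τ : ℝ) (j : ℕ) (t θ : ℝ) :
    fB B τ j (Psi t θ) = cut Dc j t * eB B τ j t θ + cut Uc j t * eB B τ (j + 1) t θ := by
  unfold fB; rw [vB_Psi, vB_Psi]

lemma qB_succ (B : ℕ) (τ : ℝ) (j : ℕ) (hj : 10 ≤ j) : qB B τ (j + 1) = qE B τ j := by
  unfold qB; rw [if_neg (by omega)]; push_cast; congr 1; ring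

lemma aB_diff (B : ℕ) (τ : ℝ) (j : ℕ) (hj : 10 ≤ j) (t : ℝ) (h1 : (j:ℝ) + 1 / 8 ≤ Real.exp (t / 2))
    (h2 : Real.exp (t / 2) ≤ j + 1) :
    aB B τ (j + 1) t - aB B τ j t = (2 * Real.log (j + 1 / 2) - t) * (B * (2 * j + 1) / τ) := by
  unfold aB dB
  have e1 : cut Hc j t = 1 := Hc_one (by linarith)
  have e2 : cut Hc ((j + 1 : ℕ) : ℝ) t = 0 := Hc_zero (by push_cast; linarith)
  rw [e1, e2, qB_succ B τ j hj]
  unfold cB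
  rw [Finset.sum_range_succ]
  unfold gB pE qE
  push_cast
  ring

lemma e_left {B : ℕ} {τ lam : ℝ} (P : Par B τ lam) (j : ℕ) (hj : 10 ≤ j) (t θ : ℝ)
    (h1 : (j:ℝ) + 1 / 8 ≤ Real.exp (t / 2)) (h2 : Real.exp (t / 2) ≤ j + 1 / 4) :
    ‖eB B τ (j + 1) t θ‖ ≤ 1 / 2 * ‖eB B τ j t θ‖ := by
  have hd := aB_diff B τ j hj t h1 (by linarith)
  have hj' : (10:ℝ) ≤ j := by exact_mod_cast hj
  obtain ⟨t1, -⟩ := tau_inv P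
  have hB : (4:ℝ) ≤ B := by exact_mod_cast P.hB
  set s := Real.exp (t / 2) with hs
  have ht : t = 2 * Real.log s := by rw [hs, Real.log_exp]; ring
  have hs0 : 0 < s := by linarith
  have l1 : 1 / (2 * (j:ℝ) + 1) ≤ 2 * Real.log (j + 1 / 2) - t := by
    have := Real.log_le_sub_one_of_pos (div_pos hs0 (by linarith : (0:ℝ) < j + 1 / 2))
    rw [Real.log_div hs0.ne' (by linarith)] at this
    have h3 : s / (j + 1 / 2) ≤ 1 - 1 / (2 * (2 * (j:ℝ) + 1)) := by
      rw [div_le_iff₀ (by linarith)]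
      have : (1 - 1 / (2 * (2 * (j:ℝ) + 1))) * (j + 1 / 2) = j + 1 / 4 := by field_simp; ring
      linarith
    have h4 : 1 / (2 * (j:ℝ) + 1) = 2 * (1 / (2 * (2 * (j:ℝ) + 1))) := by field_simp
    linarith
  have l2 : 4 * (2 * (j:ℝ) + 1) ≤ B * (2 * j + 1) / τ := by
    have : (B:ℝ) * (2 * j + 1) / τ = B * (2 * j + 1) * (1 / τ) := by ring
    rw [this]
    have a : 4 * (2 * (j:ℝ) + 1) ≤ B * (2 * j + 1) := mul_le_mul_of_nonneg_right hB (by linarith)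
    nlinarith
  have l3 : 4 ≤ aB B τ (j + 1) t - aB B τ j t := by
    rw [hd]
    calc (4:ℝ) = 1 / (2 * (j:ℝ) + 1) * (4 * (2 * (j:ℝ) + 1)) := by field_simp
      _ ≤ _ := mul_le_mul l1 l2 (by positivity) (le_trans (by positivity) l1)
  rw [eB_norm, eB_norm]
  have : Real.exp (-(aB B τ (j + 1) t)) ≤ Real.exp (-1) * Real.exp (-(aB B τ j t)) := by
    rw [← Real.exp_add]; apply Real.exp_le_exp.2; linarith
  have h5 : Real.exp (-1) ≤ 1 / 2 := by
    have := Real.exp_neg_one_lt_half; linarith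
  nlinarith [Real.exp_pos (-(aB B τ j t))]

lemma e_right {B : ℕ} {τ lam : ℝ} (P : Par B τ lam) (j : ℕ) (hj : 10 ≤ j) (t θ : ℝ)
    (h1 : (j:ℝ) + 3 / 4 ≤ Real.exp (t / 2)) (h2 : Real.exp (t / 2) ≤ j + 1) :
    ‖eB B τ j t θ‖ ≤ 1 / 2 * ‖eB B τ (j + 1) t θ‖ := by
  have hd := aB_diff B τ j hj t (by linarith) h2
  have hj' : (10:ℝ) ≤ j := by exact_mod_cast hj
  obtain ⟨t1, -⟩ := tau_inv P
  have hB : (4:ℝ) ≤ B := by exact_mod_cast P.hB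
  set s := Real.exp (t / 2) with hs
  have ht : t = 2 * Real.log s := by rw [hs, Real.log_exp]; ring
  have hs0 : 0 < s := by linarith
  have l1 : 1 / (2 * (j:ℝ) + 2) ≤ t - 2 * Real.log (j + 1 / 2) := by
    have := Real.log_le_sub_one_of_pos (div_pos (by linarith : (0:ℝ) < j + 1 / 2) hs0)
    rw [Real.log_div (by linarith) hs0.ne'] at this
    have h3 : (j + 1 / 2) / s ≤ 1 - 1 / (2 * (2 * (j:ℝ) + 2)) := by
      rw [div_le_iff₀ hs0]
      have h6 : 1 / (2 * (2 * (j:ℝ) + 2)) * s ≤ 1 / (2 * (2 * (j:ℝ) + 2)) * (j + 1) :=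
        mul_le_mul_of_nonneg_left h2 (by positivity)
      have : 1 / (2 * (2 * (j:ℝ) + 2)) * (j + 1) = 1 / 4 := by field_simp; ring
      linarith
    have h4 : 1 / (2 * (j:ℝ) + 2) = 2 * (1 / (2 * (2 * (j:ℝ) + 2))) := by field_simp
    linarith
  have l2 : 4 * (2 * (j:ℝ) + 1) ≤ B * (2 * j + 1) / τ := by
    have : (B:ℝ) * (2 * j + 1) / τ = B * (2 * j + 1) * (1 / τ) := by ring
    rw [this]
    have a : 4 * (2 * (j:ℝ) + 1) ≤ B * (2 * j + 1) := mul_le_mul_of_nonneg_right hB (by linarith)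
    nlinarith
  have l3 : 1 ≤ aB B τ j t - aB B τ (j + 1) t := by
    have : aB B τ j t - aB B τ (j + 1) t = (t - 2 * Real.log (j + 1 / 2)) * (B * (2 * j + 1) / τ) := by
      linarith
    rw [this]
    calc (1:ℝ) ≤ 1 / (2 * (j:ℝ) + 2) * (4 * (2 * (j:ℝ) + 1)) := by
          rw [div_mul_eq_mul_div, one_mul, le_div_iff₀ (by linarith)]; linarith
      _ ≤ _ := mul_le_mul l1 l2 (by positivity) (le_trans (by positivity) l1)
  rw [eB_norm, eB_norm]
  have : Real.exp (-(aB B τ j t)) ≤ Real.exp (-1) * Real.exp (-(aB B τ (j + 1) t)) := by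
    rw [← Real.exp_add]; apply Real.exp_le_exp.2; linarith
  have h5 : Real.exp (-1) ≤ 1 / 2 := by
    have := Real.exp_neg_one_lt_half; linarith
  nlinarith [Real.exp_pos (-(aB B τ (j + 1) t))]

lemma cos_shift (z ε : ℝ) (h0 : 0 ≤ ε) (h1 : ε ≤ 3 / 10) :
    1 / 2 * |Real.cos z| ≤ |Real.cos (z + ε * (Real.sin z * Real.cos z))| := by
  set δ := ε * (Real.sin z * Real.cos z) with hδ
  have hs := Real.abs_sin_le_one z
  have hc := Real.abs_cos_le_one z
  have c0 := abs_nonneg (Real.cos z)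
  have d1 : |δ| ≤ ε * |Real.cos z| := by
    rw [hδ, abs_mul, abs_mul, abs_of_nonneg h0]
    apply mul_le_mul_of_nonneg_left _ h0
    nlinarith
  have d2 : |δ| ≤ 3 / 10 := by nlinarith
  have s1 : |Real.sin δ| ≤ ε * |Real.cos z| := (Real.abs_sin_le_abs).trans d1
  have s2 : 9 / 10 ≤ Real.cos δ := by
    have := Real.one_sub_sq_div_two_le_cos (x := δ)
    have : δ ^ 2 ≤ (3 / 10) ^ 2 := by rw [← sq_abs]; exact pow_le_pow_left₀ (abs_nonneg _) d2 2
    linarith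
  rw [Real.cos_add]
  have h2 := abs_sub_abs_le_abs_sub (Real.cos z * Real.cos δ) (Real.sin z * Real.sin δ)
  rw [abs_mul, abs_mul, abs_of_nonneg (by linarith : 0 ≤ Real.cos δ)] at h2
  have h3 : |Real.sin z| * |Real.sin δ| ≤ 1 * (ε * |Real.cos z|) :=
    mul_le_mul hs s1 (abs_nonneg _) (by norm_num)
  nlinarith

lemma two_phase (r1 r2 ψ φ : ℝ) (h1 : 0 ≤ r1) (h2 : 0 ≤ r2) :
    r2 * |Real.cos (ψ / 2)| ≤ ‖(r1 : ℂ) * Complex.exp (Complex.I * φ) +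
      r2 * Complex.exp (Complex.I * (φ + ψ))‖ := by
  have e : (r1 : ℂ) * Complex.exp (Complex.I * φ) + r2 * Complex.exp (Complex.I * (φ + ψ)) =
      Complex.exp (((φ + ψ / 2 : ℝ) : ℂ) * Complex.I) *
      (r1 * Complex.exp (((-(ψ / 2) : ℝ) : ℂ) * Complex.I) + r2 * Complex.exp (((ψ / 2 : ℝ) : ℂ) * Complex.I)) := by
    have e1 : Complex.exp (Complex.I * φ) = Complex.exp (((φ + ψ / 2 : ℝ) : ℂ) * Complex.I) *
        Complex.exp (((-(ψ / 2) : ℝ) : ℂ) * Complex.I) := by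
      rw [← Complex.exp_add]; congr 1; push_cast; ring
    have e2 : Complex.exp (Complex.I * (φ + ψ)) = Complex.exp (((φ + ψ / 2 : ℝ) : ℂ) * Complex.I) *
        Complex.exp (((ψ / 2 : ℝ) : ℂ) * Complex.I) := by
      rw [← Complex.exp_add]; congr 1; push_cast; ring
    rw [e1, e2]; ring
  rw [e, norm_mul, Complex.norm_exp_ofReal_mul_I, one_mul]
  refine le_trans ?_ (Complex.abs_re_le_norm _)
  rw [Complex.add_re, Complex.re_ofReal_mul, Complex.re_ofReal_mul, Complex.exp_ofReal_mul_I_re,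
    Complex.exp_ofReal_mul_I_re, Real.cos_neg, ← add_mul, abs_mul, abs_of_nonneg (by linarith : 0 ≤ r1 + r2)]
  apply mul_le_mul_of_nonneg_right _ (abs_nonneg _)
  linarith


lemma mid_e (B : ℕ) (τ : ℝ) (j : ℕ) (hj : 10 ≤ j) (t θ : ℝ)
    (h1 : (j:ℝ) + 1 / 8 ≤ Real.exp (t / 2)) (h2 : Real.exp (t / 2) ≤ j + 1) :
    |Real.cos (NB B (j + 1) * (sg (j + 1) * θ) / 2)| * ‖eB B τ (j + 1) t θ‖ ≤
      2 * ‖eB B τ j t θ + eB B τ (j + 1) t θ‖ := by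
  have hj' : (10:ℝ) ≤ j := by exact_mod_cast hj
  obtain ⟨ep0, ep1⟩ := eps_le (j + 1) (by omega)
  have ep2 : epsB (j + 1) ≤ 3 / 10 := by push_cast at ep1; nlinarith
  set z := NB B (j + 1) * (sg (j + 1) * θ) / 2 with hz
  have hcos := cos_shift z (epsB (j + 1)) ep0 ep2
  have c1 : cut Hc j t = 1 := Hc_one (by linarith)
  have c2 : cut Hc ((j + 1 : ℕ) : ℝ) t = 0 := Hc_zero (by push_cast; linarith)
  have hsg : sg j = - sg (j + 1) := by unfold sg; rw [pow_succ]; ring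
  set ψ : ℝ := 2 * (z + epsB (j + 1) * (Real.sin z * Real.cos z)) with hψ
  set φ : ℝ := -(nB B j * (sg (j + 1) * θ)) with hφ
  have Ee1 : eB B τ j t θ = (Real.exp (-(aB B τ j t)) : ℂ) * Complex.exp (Complex.I * φ) := by
    unfold eB wph EB
    rw [c1, Complex.ofReal_exp, ← Complex.exp_add]
    congr 1
    rw [hφ, hsg]; push_cast; ring
  have Ee2 : eB B τ (j + 1) t θ = (Real.exp (-(aB B τ (j + 1) t)) : ℂ) *
      Complex.exp (Complex.I * (φ + ψ)) := by
    unfold eB wph EB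
    rw [c2, Complex.ofReal_exp, ← Complex.exp_add]
    congr 1
    have hS : Real.sin (NB B (j + 1) * (sg (j + 1) * θ)) = 2 * Real.sin z * Real.cos z := by
      rw [← Real.sin_two_mul]; congr 1; rw [hz]; ring
    rw [hS]
    have : φ + ψ = nB B (j + 1) * (sg (j + 1) * θ) + epsB (j + 1) * (2 * Real.sin z * Real.cos z) := by
      have : (nB B j : ℝ) + nB B (j + 1) = NB B (j + 1) := by
        rw [NB_cast _ _ (by omega)]; unfold nB; push_cast; ring
      rw [hφ, hψ, hz, ← this]; ring
    rw [← Complex.ofReal_add, this]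
    push_cast; ring
  have := two_phase (Real.exp (-(aB B τ j t))) (Real.exp (-(aB B τ (j + 1) t))) ψ φ
    (Real.exp_pos _).le (Real.exp_pos _).le
  rw [← Ee1, ← Ee2, show ψ / 2 = z + epsB (j + 1) * (Real.sin z * Real.cos z) by rw [hψ]; ring] at this
  have h4 := eB_norm B τ (j + 1) t θ
  rw [h4]
  have h3 := mul_le_mul_of_nonneg_left hcos (Real.exp_pos (-(aB B τ (j + 1) t))).le
  linarith

set_option maxHeartbeats 1000000 in
lemma mid_second (B : ℕ) (j : ℕ) (hj : 10 ≤ j) (s Y : ℝ) (h1 : (j:ℝ) ≤ s) (h2 : s ≤ j + 1) :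
    ‖(((B * ((j:ℝ) ^ 2 - 2 * j - 1)) ^ 2 : ℝ) : ℂ)
        - Complex.I * epsB (j + 1) * NB B (j + 1) ^ 2 * Real.sin Y
        - (nB B (j + 1) + epsB (j + 1) * NB B (j + 1) * Real.cos Y) ^ 2‖ ≤
      60 * B ^ 2 * s ^ 3 * |Real.cos (Y / 2)| := by
  have hj' : (10:ℝ) ≤ j := by exact_mod_cast hj
  have hs0 : 0 < s := by linarith
  have hB0 : (0:ℝ) ≤ B := by positivity
  obtain ⟨ep0, -⟩ := eps_le (j + 1) (by omega)
  have hN := NB_cast B (j + 1) (by omega)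
  have hN' : (NB B (j + 1) : ℝ) = B * ((j:ℝ) ^ 2 + (j + 1) ^ 2) := by
    rw [hN]; push_cast; ring
  have hEN : epsB (j + 1) * NB B (j + 1) = 2 * B * (2 * j + 1) := by
    rw [hN']; unfold epsB; rw [if_neg (by omega)]; push_cast
    have : (j:ℝ) + 1 - 1 = j := by ring
    rw [this]
    have : ((j:ℝ) ^ 2 + (j + 1) ^ 2) ≠ 0 := by positivity
    field_simp
  have hn : (nB B (j + 1) : ℝ) = B * ((j:ℝ) + 1) ^ 2 := by unfold nB; push_cast; ring
  set m := B * ((j:ℝ) ^ 2 - 2 * j - 1) with hm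
  set G := epsB (j + 1) * NB B (j + 1) with hG
  have hnm : (nB B (j + 1) : ℝ) = m + G := by rw [hn, hEN, hm]; ring
  set c := Real.cos (Y / 2) with hc
  set S := Real.sin (Y / 2)
  have hC : Real.cos Y = 2 * c ^ 2 - 1 := by
    rw [hc, ← Real.cos_two_mul]; congr 1; ring
  have hS : Real.sin Y = 2 * S * c := by
    rw [hc, ← Real.sin_two_mul]; congr 1; ring
  have e : (((m) ^ 2 : ℝ) : ℂ)
        - Complex.I * epsB (j + 1) * NB B (j + 1) ^ 2 * Real.sin Y
        - (nB B (j + 1) + epsB (j + 1) * NB B (j + 1) * Real.cos Y) ^ 2 =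
      ((-(c * (2 * G * c * (2 * m + 2 * G * c ^ 2))) : ℝ) : ℂ) -
       Complex.I * ((c * (2 * G * NB B (j + 1) * S) : ℝ) : ℂ) := by
    have a1 : ((nB B (j + 1) : ℕ) : ℂ) = ((m + G : ℝ) : ℂ) := by rw [← hnm]; simp
    have a2 : (epsB (j + 1) : ℂ) * (NB B (j + 1) : ℂ) = (G : ℂ) := by rw [hG]; push_cast; rfl
    have a3 : Complex.I * (epsB (j + 1) : ℂ) * (NB B (j + 1) : ℂ) ^ 2 =
      Complex.I * (G:ℂ) * NB B (j + 1) := by rw [← a2]; ring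
    rw [a3, a2, a1, hC, hS]
    push_cast
    ring
  rw [e]
  refine (norm_sub_le _ _).trans ?_
  rw [norm_mul, Complex.norm_I, one_mul, Complex.norm_real, Complex.norm_real, Real.norm_eq_abs,
    Real.norm_eq_abs, abs_neg, abs_mul c, abs_mul c]
  have hc1 : |c| ≤ 1 := Real.abs_cos_le_one _
  have hS1 : |S| ≤ 1 := Real.abs_sin_le_one _
  have hG0 : 0 ≤ G := by rw [hEN]; positivity
  have hG1 : G ≤ 5 * B * s := by
    rw [hEN]
    have : (B:ℝ) * (2 * (2 * j + 1)) ≤ B * (5 * s) := mul_le_mul_of_nonneg_left (by linarith) hB0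
    linarith
  have hm0 : 0 ≤ m := mul_nonneg hB0 (by nlinarith)
  have hm1 : m ≤ B * s ^ 2 := mul_le_mul_of_nonneg_left (by nlinarith) hB0
  have hN1 : (NB B (j + 1) : ℝ) ≤ 3 * B * s ^ 2 := by
    rw [hN']
    have : (B:ℝ) * ((j:ℝ) ^ 2 + (j + 1) ^ 2) ≤ B * (3 * s ^ 2) :=
      mul_le_mul_of_nonneg_left (by nlinarith) hB0
    linarith
  have hc2 : c ^ 2 ≤ 1 := by rw [← sq_abs]; exact pow_le_one₀ (abs_nonneg _) hc1
  have k1 : |2 * G * c * (2 * m + 2 * G * c ^ 2)| ≤ 30 * B ^ 2 * s ^ 3 := by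
    have i1 : |2 * G * c| ≤ 10 * B * s := by
      rw [abs_mul, abs_of_nonneg (by positivity : 0 ≤ 2 * G)]
      have := mul_le_mul (by linarith : 2 * G ≤ 10 * B * s) hc1 (abs_nonneg c) (by positivity)
      linarith
    have i2 : |2 * m + 2 * G * c ^ 2| ≤ 3 * B * s ^ 2 := by
      rw [abs_of_nonneg (by positivity)]
      have : G * c ^ 2 ≤ G * 1 := mul_le_mul_of_nonneg_left hc2 hG0
      have : B * (10 * s) ≤ B * (s * s) :=
        mul_le_mul_of_nonneg_left (mul_le_mul_of_nonneg_right (by linarith) hs0.le) hB0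
      have e2 : B * (s * s) = B * s ^ 2 := by ring
      linarith
    exact (abs_mul_le i1 i2).trans (le_of_eq (by ring))
  have k2 : |2 * G * NB B (j + 1) * S| ≤ 30 * B ^ 2 * s ^ 3 := by
    have i1 : |2 * G * NB B (j + 1)| ≤ (10 * B * s) * (3 * B * s ^ 2) := by
      apply abs_mul_le
      · rw [abs_of_nonneg (by positivity)]; linarith
      · rw [abs_of_nonneg (by positivity)]; exact hN1
    exact (abs_mul_le i1 hS1).trans (le_of_eq (by ring))
  have l1 := mul_le_mul_of_nonneg_left k1 (abs_nonneg c)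
  have l2 := mul_le_mul_of_nonneg_left k2 (abs_nonneg c)
  linarith

lemma pq_id (B : ℕ) (τ j : ℝ) (h : τ ≠ 0) :
    pE B τ j ^ 2 - (B * j ^ 2) ^ 2 = qE B τ j ^ 2 - (B * (j ^ 2 - 2 * j - 1)) ^ 2 := by
  unfold pE qE; field_simp; ring

set_option maxHeartbeats 1000000 in
lemma region {B : ℕ} {τ lam : ℝ} (P : Par B τ lam) (M : ℝ) (hM : 1 ≤ M) (hH : CutB Hc M)
    (hU : CutB Uc M) (hD : CutB Dc M) (j : ℕ) (hj : 10 ≤ j) (t θ : ℝ)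
    (hs1 : (j:ℝ) ≤ Real.exp (t / 2)) (hs2 : Real.exp (t / 2) ≤ j + 1) :
    ‖lap (fB B τ j) (Psi t θ) * (Real.exp t : ℂ) ^ 2 +
      lam * (Real.exp (t / 2) : ℂ) ^ 4 * fB B τ j (Psi t θ)‖ ≤
      (120 * KB B M ^ 3 + 120 * B ^ 2) * Real.exp (t / 2) ^ 3 * ‖fB B τ j (Psi t θ)‖ := by
  have hj' : (10:ℝ) ≤ j := by exact_mod_cast hj
  have A1 := blockA P M hM hH Dc hD j j hj t θ (by rw [abs_le]; constructor <;> linarith)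
    (by rw [abs_le]; constructor <;> linarith)
  have A2 := blockA P M hM hH Uc hU j (j + 1) (by omega) t θ
    (by push_cast; rw [abs_le]; constructor <;> linarith)
    (by rw [abs_le]; constructor <;> linarith)
  rw [← eB_norm B τ j t θ] at A1
  rw [← eB_norm B τ (j + 1) t θ] at A2
  have hK := KB_ge B P.hB M hM
  have hK0 : 0 < KB B M := by linarith
  set K1 := 40 * KB B M ^ 3 with hK1
  have hK10 : 0 < K1 := by positivity
  have hKe : (120 * KB B M ^ 3 + 120 * (B:ℝ) ^ 2) = 3 * K1 + 120 * B ^ 2 := by rw [hK1]; ring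
  rw [hKe]
  have hB2 : (0:ℝ) ≤ 120 * B ^ 2 := by positivity
  have hs3 : 0 < Real.exp (t / 2) ^ 3 := by positivity
  have fin : ∀ r : ℝ, 0 ≤ r → K1 * Real.exp (t / 2) ^ 3 * r ≤
      (3 * K1 + 120 * B ^ 2) * Real.exp (t / 2) ^ 3 * r := by
    intro r hr; gcongr; linarith
  have fin3 : ∀ r : ℝ, 0 ≤ r → 3 * K1 * Real.exp (t / 2) ^ 3 * r ≤
      (3 * K1 + 120 * B ^ 2) * Real.exp (t / 2) ^ 3 * r := by
    intro r hr; gcongr; linarith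
  have hF : lap (fB B τ j) (Psi t θ) * (Real.exp t : ℂ) ^ 2 +
      lam * (Real.exp (t / 2) : ℂ) ^ 4 * fB B τ j (Psi t θ) =
      (lap (vB B τ (cut Dc j) j) (Psi t θ) * (Real.exp t : ℂ) ^ 2 +
        lam * (Real.exp (t / 2) : ℂ) ^ 4 * (cut Dc j t * eB B τ j t θ)) +
      (lap (vB B τ (cut Uc j) (j + 1)) (Psi t θ) * (Real.exp t : ℂ) ^ 2 +
        lam * (Real.exp (t / 2) : ℂ) ^ 4 * (cut Uc j t * eB B τ (j + 1) t θ)) := by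
    rw [fB_lap, fB_Psi]; ring
  rcases lt_or_ge (Real.exp (t / 2)) (j + 1 / 8) with w1 | w1
  · -- only block j
    have z := ev_lt (fun w hw => Uc_zero hw) (by linarith : Real.exp (t / 2) - j < 1 / 8)
    have z0 := (cut_const Uc j t 0 z).1
    have z1 := vB_lap_zero B τ Uc j Uc_cd (j + 1) t θ z
    have d0 : cut Dc j t = 1 := Dc_one (by linarith)
    have hf : fB B τ j (Psi t θ) = eB B τ j t θ := by rw [fB_Psi, z0, d0]; simp
    rw [hF, z1, z0, hf]
    simp only [Complex.ofReal_zero, zero_mul, mul_zero, add_zero]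
    exact A1.trans (fin _ (norm_nonneg _))
  rcases lt_or_ge (j + 7 / 8 : ℝ) (Real.exp (t / 2)) with w2 | w2
  · have z := ev_gt (fun w hw => Dc_zero hw) (by linarith : 7 / 8 < Real.exp (t / 2) - j)
    have z0 := (cut_const Dc j t 0 z).1
    have z1 := vB_lap_zero B τ Dc j Dc_cd j t θ z
    have d0 : cut Uc j t = 1 := Uc_one (by linarith)
    have hf : fB B τ j (Psi t θ) = eB B τ (j + 1) t θ := by rw [fB_Psi, z0, d0]; simp
    rw [hF, z1, z0, hf]
    simp only [Complex.ofReal_zero, zero_mul, mul_zero, zero_add]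
    exact A2.trans (fin _ (norm_nonneg _))
  rcases le_or_gt (Real.exp (t / 2)) (j + 1 / 4) with w3 | w3
  · have hl := e_left P j hj t θ w1 w3
    have d0 : cut Dc j t = 1 := Dc_one (by linarith)
    have hu : 0 ≤ cut Uc j t ∧ cut Uc j t ≤ 1 := Uc_mem _
    have hf : 1 / 2 * ‖eB B τ j t θ‖ ≤ ‖fB B τ j (Psi t θ)‖ := by
      rw [fB_Psi, d0]
      have := norm_sub_le_norm_add (((1:ℝ):ℂ) * eB B τ j t θ) (cut Uc j t * eB B τ (j + 1) t θ)
      rw [norm_mul, norm_mul, Complex.norm_real, Complex.norm_real, norm_one, one_mul,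
        Real.norm_of_nonneg hu.1] at this
      nlinarith [norm_nonneg (eB B τ (j + 1) t θ)]
    rw [hF]
    refine (norm_add_le _ _).trans ((add_le_add A1 A2).trans ?_)
    refine le_trans ?_ (fin3 _ (norm_nonneg _))
    have q : 0 ≤ K1 * Real.exp (t / 2) ^ 3 := by positivity
    have q1 := mul_le_mul_of_nonneg_left hf q
    have q2 := mul_le_mul_of_nonneg_left hl q
    linarith
  rcases le_or_gt (j + 3 / 4 : ℝ) (Real.exp (t / 2)) with w4 | w4
  · have hl := e_right P j hj t θ w4 hs2
    have d0 : cut Uc j t = 1 := Uc_one (by linarith)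
    have hu : 0 ≤ cut Dc j t ∧ cut Dc j t ≤ 1 := Dc_mem _
    have hf : 1 / 2 * ‖eB B τ (j + 1) t θ‖ ≤ ‖fB B τ j (Psi t θ)‖ := by
      rw [fB_Psi, d0, add_comm (((cut Dc j t : ℝ):ℂ) * _)]
      have := norm_sub_le_norm_add (((1:ℝ):ℂ) * eB B τ (j + 1) t θ) (cut Dc j t * eB B τ j t θ)
      rw [norm_mul, norm_mul, Complex.norm_real, Complex.norm_real, norm_one, one_mul,
        Real.norm_of_nonneg hu.1] at this
      nlinarith [norm_nonneg (eB B τ j t θ)]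
    rw [hF]
    refine (norm_add_le _ _).trans ((add_le_add A1 A2).trans ?_)
    refine le_trans ?_ (fin3 _ (norm_nonneg _))
    have q : 0 ≤ K1 * Real.exp (t / 2) ^ 3 := by positivity
    have q1 := mul_le_mul_of_nonneg_left hf q
    have q2 := mul_le_mul_of_nonneg_left hl q
    linarith
  -- middle region
  obtain ⟨d0, d1, d2⟩ := cut_const Dc j t 1
    (ev_lt (fun w hw => Dc_one hw) (by linarith : Real.exp (t / 2) - j < 3 / 4))
  obtain ⟨u0, u1, u2⟩ := cut_const Uc j t 1
    (ev_gt (fun w hw => Uc_one hw) (by linarith : 1 / 4 < Real.exp (t / 2) - j))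
  obtain ⟨a0, a1, a2⟩ := cut_const Hc j t 1
    (ev_gt (fun w hw => Hc_one hw) (by linarith : 1 / 8 < Real.exp (t / 2) - j))
  obtain ⟨b0, b1, b2⟩ := cut_const Hc ((j + 1 : ℕ) : ℝ) t 0
    (ev_lt (fun w hw => Hc_zero hw) (by push_cast; linarith : Real.exp (t / 2) - ((j + 1 : ℕ) : ℝ) < 0))
  have L1 : lap (vB B τ (cut Dc j) j) (Psi t θ) * (Real.exp t : ℂ) ^ 2 = eB B τ j t θ *
      (((pE B τ j) ^ 2 - (B * (j:ℝ) ^ 2) ^ 2 : ℝ) : ℂ) := by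
    rw [vB_lap B τ Dc j Dc_cd]
    unfold aB1 aB2 EB EB1 EB2 dB
    rw [d0, d1, d2, a0, a1, a2]
    unfold nB
    push_cast
    ring
  have L2 : lap (vB B τ (cut Uc j) (j + 1)) (Psi t θ) * (Real.exp t : ℂ) ^ 2 = eB B τ (j + 1) t θ *
      (((qE B τ j) ^ 2 : ℝ)
        - Complex.I * epsB (j + 1) * NB B (j + 1) ^ 2 * Real.sin (NB B (j + 1) * (sg (j + 1) * θ))
        - (nB B (j + 1) + epsB (j + 1) * NB B (j + 1) * Real.cos (NB B (j + 1) * (sg (j + 1) * θ))) ^ 2) := by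
    rw [vB_lap B τ Uc j Uc_cd]
    unfold aB1 aB2 EB EB1 EB2 dB
    rw [u0, u1, u2, b0, b1, b2, qB_succ B τ j hj]
    push_cast
    ring
  have hτ : τ ≠ 0 := by have := P.h2; intro h; rw [h] at this; norm_num at this
  have hpq := pq_id B τ j hτ
  have hm2 := mid_second B j hj (Real.exp (t / 2)) (NB B (j + 1) * (sg (j + 1) * θ)) hs1 hs2
  have hme := mid_e B τ j hj t θ w1 hs2
  set Aa : ℝ := (pE B τ j) ^ 2 - (B * (j:ℝ) ^ 2) ^ 2 + lam * Real.exp (t / 2) ^ 4 with hAa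
  have hA : |Aa| ≤ K1 * Real.exp (t / 2) ^ 3 := by
    rw [L1, d0] at A1
    have : eB B τ j t θ * (((pE B τ j) ^ 2 - (B * (j:ℝ) ^ 2) ^ 2 : ℝ) : ℂ) +
        lam * (Real.exp (t / 2) : ℂ) ^ 4 * (((1:ℝ):ℂ) * eB B τ j t θ) = Aa * eB B τ j t θ := by
      rw [hAa]; push_cast; ring
    rw [this, norm_mul, Complex.norm_real, Real.norm_eq_abs] at A1
    refine le_of_mul_le_mul_right A1 ?_
    rw [eB_norm]; exact Real.exp_pos _
  rw [hF, L1, L2, d0, u0, fB_Psi, d0, u0]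
  have hq : (((qE B τ j) ^ 2 : ℝ) : ℂ) = ((Aa - lam * Real.exp (t / 2) ^ 4 +
      (B * ((j:ℝ) ^ 2 - 2 * j - 1)) ^ 2 : ℝ) : ℂ) := by
    congr 1; rw [hAa]; linarith
  set Bk : ℂ := (((B * ((j:ℝ) ^ 2 - 2 * j - 1)) ^ 2 : ℝ) : ℂ)
        - Complex.I * epsB (j + 1) * NB B (j + 1) ^ 2 * Real.sin (NB B (j + 1) * (sg (j + 1) * θ))
        - (nB B (j + 1) + epsB (j + 1) * NB B (j + 1) * Real.cos (NB B (j + 1) * (sg (j + 1) * θ))) ^ 2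
    with hBk
  have e : eB B τ j t θ * (((pE B τ j) ^ 2 - (B * (j:ℝ) ^ 2) ^ 2 : ℝ) : ℂ) +
        lam * (Real.exp (t / 2) : ℂ) ^ 4 * (((1:ℝ):ℂ) * eB B τ j t θ) +
      (eB B τ (j + 1) t θ *
      (((qE B τ j) ^ 2 : ℝ)
        - Complex.I * epsB (j + 1) * NB B (j + 1) ^ 2 * Real.sin (NB B (j + 1) * (sg (j + 1) * θ))
        - (nB B (j + 1) + epsB (j + 1) * NB B (j + 1) * Real.cos (NB B (j + 1) * (sg (j + 1) * θ))) ^ 2) +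
       lam * (Real.exp (t / 2) : ℂ) ^ 4 * (((1:ℝ):ℂ) * eB B τ (j + 1) t θ)) =
      Aa * (eB B τ j t θ + eB B τ (j + 1) t θ) + eB B τ (j + 1) t θ * Bk := by
    rw [hq, hBk, hAa]; push_cast; ring
  rw [e, Complex.ofReal_one, one_mul, one_mul]
  refine (norm_add_le _ _).trans ?_
  rw [norm_mul, norm_mul, Complex.norm_real, Real.norm_eq_abs]
  have f1 := mul_le_mul_of_nonneg_right hA (norm_nonneg (eB B τ j t θ + eB B τ (j + 1) t θ))
  have f2 := mul_le_mul_of_nonneg_left hm2 (norm_nonneg (eB B τ (j + 1) t θ))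
  have f3 := mul_le_mul_of_nonneg_left hme (by positivity : 0 ≤ 60 * (B:ℝ) ^ 2 * Real.exp (t / 2) ^ 3)
  have f4 : 0 ≤ K1 * Real.exp (t / 2) ^ 3 * ‖eB B τ j t θ + eB B τ (j + 1) t θ‖ := by positivity
  linarith


/-- global solution -/
def uB (B : ℕ) (τ : ℝ) (x : E2) : ℂ := fB B τ (max 10 ⌊Real.sqrt ‖x‖⌋₊) x

lemma exp_half_log (x : E2) (hx : x ≠ 0) : Real.exp (Real.log ‖x‖ / 2) = Real.sqrt ‖x‖ := by
  have h := norm_pos_iff.2 hx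
  rw [← Real.exp_log (Real.sqrt_pos.2 h), Real.log_sqrt h.le]

lemma glue (B : ℕ) (τ : ℝ) (j : ℕ) (x : E2) (hx : x ≠ 0) (h1 : (j:ℝ) + 7 / 8 ≤ Real.sqrt ‖x‖)
    (h2 : Real.sqrt ‖x‖ ≤ j + 1 + 1 / 8) : fB B τ j x = fB B τ (j + 1) x := by
  rw [← exp_half_log x hx] at h1 h2
  unfold fB vB Wt
  have a1 : cut Dc j (Real.log ‖x‖) = 0 := Dc_zero (by linarith)
  have a2 : cut Uc j (Real.log ‖x‖) = 1 := Uc_one (by linarith)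
  have a3 : cut Dc ((j + 1 : ℕ):ℝ) (Real.log ‖x‖) = 1 := Dc_one (by push_cast; linarith)
  have a4 : cut Uc ((j + 1 : ℕ):ℝ) (Real.log ‖x‖) = 0 := Uc_zero (by push_cast; linarith)
  rw [a1, a2, a3, a4]
  simp

lemma uB_eq (B : ℕ) (τ : ℝ) (j : ℕ) (hj : 10 ≤ j) (x : E2)
    (h1 : j = 10 ∨ (j:ℝ) - 1 / 8 < Real.sqrt ‖x‖) (h2 : Real.sqrt ‖x‖ < j + 1) :
    uB B τ x = fB B τ j x := by
  have s0 : 0 ≤ Real.sqrt ‖x‖ := Real.sqrt_nonneg _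
  unfold uB
  rcases le_or_gt (j:ℝ) (Real.sqrt ‖x‖) with h | h
  · have : ⌊Real.sqrt ‖x‖⌋₊ = j := (Nat.floor_eq_iff s0).2 ⟨h, h2⟩
    rw [this, max_eq_right hj]
  · by_cases h10 : j = 10
    · subst h10
      have : ⌊Real.sqrt ‖x‖⌋₊ < 10 := (Nat.floor_lt s0).2 h
      rw [max_eq_left this.le]
    · have h3 := h1.resolve_left h10
      obtain ⟨k, rfl⟩ : ∃ k, j = k + 1 := ⟨j - 1, by omega⟩
      push_cast at h h3
      have hk : (9:ℝ) ≤ k := by exact_mod_cast (by omega : 9 ≤ k)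
      have hk2 : (10:ℕ) ≤ k := by omega
      have : ⌊Real.sqrt ‖x‖⌋₊ = k := (Nat.floor_eq_iff s0).2 ⟨by linarith, h⟩
      rw [this, max_eq_right hk2]
      apply glue B τ k x _ (by linarith) (by linarith)
      rintro rfl
      simp at h3; linarith

lemma uB_ev (B : ℕ) (τ : ℝ) (x : E2) (j : ℕ) (hjj : j = max 10 ⌊Real.sqrt ‖x‖⌋₊) :
    uB B τ =ᶠ[𝓝 x] fB B τ j := by
  have hc : Continuous (fun y : E2 => Real.sqrt ‖y‖) := continuous_norm.sqrt
  have hj : 10 ≤ j := by rw [hjj]; exact le_max_left _ _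
  have h2 : Real.sqrt ‖x‖ < j + 1 := by
    have := Nat.lt_floor_add_one (Real.sqrt ‖x‖)
    have h3 : (⌊Real.sqrt ‖x‖⌋₊ : ℝ) ≤ j := by rw [hjj]; exact_mod_cast le_max_right _ _
    linarith
  have ev2 : ∀ᶠ y in 𝓝 x, Real.sqrt ‖y‖ < j + 1 := hc.continuousAt.eventually_lt continuousAt_const h2
  by_cases h10 : j = 10
  · filter_upwards [ev2] with y hy using uB_eq B τ j hj y (Or.inl h10) hy
  · have h4 : j = ⌊Real.sqrt ‖x‖⌋₊ := by
      rcases max_choice 10 ⌊Real.sqrt ‖x‖⌋₊ with h | h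
      · omega
      · omega
    have h5 : (j:ℝ) ≤ Real.sqrt ‖x‖ := by rw [h4]; exact Nat.floor_le (Real.sqrt_nonneg _)
    have ev1 : ∀ᶠ y in 𝓝 x, (j:ℝ) - 1 / 8 < Real.sqrt ‖y‖ :=
      continuousAt_const.eventually_lt hc.continuousAt (by linarith)
    filter_upwards [ev1, ev2] with y hy1 hy using uB_eq B τ j hj y (Or.inr hy1) hy

/-- the complex coordinate -/
def zc : E2 →L[ℝ] ℂ :=
  Complex.ofRealCLM.comp (EuclideanSpace.proj (0 : Fin 2) : E2 →L[ℝ] ℝ) +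
    Complex.I • Complex.ofRealCLM.comp (EuclideanSpace.proj (1 : Fin 2) : E2 →L[ℝ] ℝ)

lemma zc_apply (x : E2) : zc x = x 0 + Complex.I * x 1 := by simp [zc]

/-- constant of the inner part -/
def cIn (B : ℕ) (τ : ℝ) : ℝ := Real.exp (-(cB B τ 10 + 200 * B * Real.log 10))

lemma uB_inner (B : ℕ) (hB : 4 ≤ B) (τ : ℝ) (x : E2) (hx : ‖x‖ < 100) :
    uB B τ x = cIn B τ * zc x ^ (100 * B) := by
  have hs : Real.sqrt ‖x‖ < 10 := by
    rw [Real.sqrt_lt' (by norm_num)]; linarith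
  rw [uB_eq B τ 10 le_rfl x (Or.inl rfl) (by push_cast; linarith)]
  have hn : nB B 10 = 100 * B := by unfold nB; ring
  have hn2 : nB B (10 + 1) ≠ 0 := by unfold nB; positivity
  have hn3 : 100 * B ≠ 0 := by omega
  by_cases h0 : x = 0
  · subst h0
    unfold fB vB Wt
    rw [hn]
    simp [eu, hn2, hn3]
  · rw [← exp_half_log x h0] at hs
    unfold fB vB Wt
    have a1 : cut Dc ((10:ℕ):ℝ) (Real.log ‖x‖) = 1 := Dc_one (by push_cast; linarith)
    have a2 : cut Uc ((10:ℕ):ℝ) (Real.log ‖x‖) = 0 := Uc_zero (by push_cast; linarith)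
    have a3 : cut Hc ((10:ℕ):ℝ) (Real.log ‖x‖) = 0 := Hc_zero (by push_cast; linarith)
    have hnx : 0 < ‖x‖ := norm_pos_iff.2 h0
    have e1 : EB 10 (Real.log ‖x‖) = 0 := by unfold EB epsB; simp
    have e2 : aB B τ 10 (Real.log ‖x‖) = cB B τ 10 + 200 * B * Real.log 10
        - (100 * B : ℕ) * Real.log ‖x‖ := by
      unfold aB qB; rw [a3, if_pos rfl]; push_cast; ring
    have e3 : Real.exp (-(aB B τ 10 (Real.log ‖x‖))) = cIn B τ * ‖x‖ ^ (100 * B) := by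
      rw [e2]; unfold cIn
      rw [← Real.exp_log (pow_pos hnx (100 * B)), ← Real.exp_add, Real.log_pow]
      congr 1; ring
    have e4 : sg 10 = 1 := by unfold sg; norm_num
    have hnc : (‖x‖ : ℂ) ≠ 0 := by exact_mod_cast hnx.ne'
    rw [a1, a2, e1, hn, e4]
    have e5 : Complex.exp (-(aB B τ 10 (Real.log ‖x‖) : ℂ)) = ((cIn B τ * ‖x‖ ^ (100 * B) : ℝ) : ℂ) := by
      rw [← e3]; push_cast; rfl
    have e6 : eu 1 x = zc x / ‖x‖ := by unfold eu; rw [zc_apply]; simp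
    simp only [Complex.ofReal_zero, mul_zero, zero_mul, add_zero, Complex.ofReal_one, one_mul]
    rw [e5, e6, div_pow]
    push_cast
    have := pow_ne_zero (100 * B) hnc
    field_simp

lemma zc_pow_fderiv (c : ℂ) (n : ℕ) (x v : E2) :
    fderiv ℝ (fun y : E2 => c * zc y ^ n) x v = c * (n * zc x ^ (n - 1)) * zc v := by
  have h : HasFDerivAt (fun y : E2 => c * zc y ^ n) ((c * (n * zc x ^ (n - 1))) • zc) x := by
    have h1 : HasDerivAt (fun z : ℂ => c * z ^ n) (c * (n * zc x ^ (n - 1))) (zc x) :=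
      (hasDerivAt_pow n (zc x)).const_mul c
    exact h1.comp_hasFDerivAt_of_eq x zc.hasFDerivAt rfl
  rw [h.fderiv]; simp

lemma zc_pow_lap (c : ℂ) (n : ℕ) (x : E2) : lap (fun y : E2 => c * zc y ^ n) x = 0 := by
  unfold lap pd
  have e : ∀ i : Fin 2, (fun y => fderiv ℝ (fun y : E2 => c * zc y ^ n) y (EuclideanSpace.single i 1)) =
      fun y => (c * n * zc (EuclideanSpace.single i 1)) * zc y ^ (n - 1) := by
    intro i; funext y; rw [zc_pow_fderiv]; ring
  simp only [e]
  rw [Fin.sum_univ_two, zc_pow_fderiv, zc_pow_fderiv]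
  have z0 : zc (EuclideanSpace.single (0 : Fin 2) 1) = 1 := by rw [zc_apply]; simp
  have z1 : zc (EuclideanSpace.single (1 : Fin 2) 1) = Complex.I := by rw [zc_apply]; simp
  rw [z0, z1]
  linear_combination (c * n * (((n - 1 : ℕ) : ℂ) * zc x ^ (n - 1 - 1))) * Complex.I_sq

lemma uB_inner_ev (B : ℕ) (hB : 4 ≤ B) (τ : ℝ) (x : E2) (hx : ‖x‖ < 100) :
    uB B τ =ᶠ[𝓝 x] fun y => (cIn B τ : ℂ) * zc y ^ (100 * B) := by
  filter_upwards [continuous_norm.continuousAt.eventually_lt continuousAt_const hx] with y hy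
    using uB_inner B hB τ y hy

lemma uB_cd (B : ℕ) (hB : 4 ≤ B) (τ : ℝ) : ContDiff ℝ 2 (uB B τ) := by
  rw [contDiff_iff_contDiffAt]
  intro x
  by_cases h0 : x = 0
  · subst h0
    refine ContDiffAt.congr_of_eventuallyEq ?_ (uB_inner_ev B hB τ 0 (by simp))
    exact (contDiff_const.mul (zc.contDiff.pow _)).contDiffAt
  · refine ContDiffAt.congr_of_eventuallyEq ?_ (uB_ev B τ x _ rfl)
    exact (vB_cd _ _ _ _ Dc_cd _ _ h0).add (vB_cd _ _ _ _ Uc_cd _ _ h0)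

lemma uB_ne (B : ℕ) (hB : 4 ≤ B) (τ : ℝ) : uB B τ ≠ 0 := by
  intro h
  have h1 := congrFun h (EuclideanSpace.single 0 1)
  rw [uB_inner B hB τ _ (by simp)] at h1
  have z0 : zc (EuclideanSpace.single (0 : Fin 2) 1) = 1 := by rw [zc_apply]; simp
  rw [z0] at h1
  have : cIn B τ ≠ 0 := (Real.exp_pos _).ne'
  simp at h1
  exact this h1


lemma jap_weight (x : E2) (s : ℝ) (hs : 0 < s) (h : 1 + ‖x‖ ^ 2 ≤ (4 * s ^ 2) ^ 2) :
    1 / s ≤ 2 * Real.sqrt (1 + ‖x‖ ^ 2) ^ (-(1 / 2 : ℝ)) := by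
  have h1 : 0 < Real.sqrt (1 + ‖x‖ ^ 2) := by positivity
  rw [Real.rpow_neg h1.le, ← Real.sqrt_eq_rpow]
  have h2 : Real.sqrt (1 + ‖x‖ ^ 2) ≤ 4 * s ^ 2 := by
    rw [Real.sqrt_le_left (by positivity)]; exact h
  have h3 : Real.sqrt (Real.sqrt (1 + ‖x‖ ^ 2)) ≤ 2 * s := by
    rw [Real.sqrt_le_left (by positivity)]; nlinarith
  have h4 : 0 < Real.sqrt (Real.sqrt (1 + ‖x‖ ^ 2)) := Real.sqrt_pos.2 h1
  rw [← div_eq_mul_inv, div_le_div_iff₀ hs h4]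
  linarith

lemma uB_L {B : ℕ} {τ lam : ℝ} (P : Par B τ lam) (M : ℝ) (hM : 1 ≤ M) (hH : CutB Hc M)
    (hU : CutB Uc M) (hD : CutB Dc M) (x : E2) :
    ‖lap (uB B τ) x + lam * uB B τ x‖ ≤
      (20 * |lam| + 2 * (120 * KB B M ^ 3 + 120 * B ^ 2)) *
        Real.sqrt (1 + ‖x‖ ^ 2) ^ (-(1 / 2 : ℝ)) * ‖uB B τ x‖ := by
  have hK := KB_ge B P.hB M hM
  have hK0 : 0 < KB B M := by linarith
  set K := 120 * KB B M ^ 3 + 120 * (B:ℝ) ^ 2 with hKd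
  have hKp : 0 < K := by positivity
  rcases lt_or_ge ‖x‖ 100 with hx | hx
  · rw [lap_congr (uB_inner_ev B P.hB τ x hx), zc_pow_lap, zero_add, norm_mul, Complex.norm_real,
      Real.norm_eq_abs]
    apply mul_le_mul_of_nonneg_right _ (norm_nonneg _)
    have := jap_weight x 10 (by norm_num) (by nlinarith [norm_nonneg x])
    set y := Real.sqrt (1 + ‖x‖ ^ 2) ^ (-(1 / 2 : ℝ))
    have hy : 1 ≤ 20 * y := by linarith
    nlinarith [abs_nonneg lam]
  · have h0 : x ≠ 0 := by rintro rfl; simp at hx; linarith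
    have hxp : 0 < ‖x‖ := by linarith
    obtain ⟨θ, hθ⟩ := Psi_surj x h0
    have hexp := exp_half_log x h0
    set s := Real.sqrt ‖x‖ with hs
    have hs10 : 10 ≤ s := by rw [hs]; apply Real.le_sqrt_of_sq_le; linarith
    have hs2 : s ^ 2 = ‖x‖ := Real.sq_sqrt hxp.le
    have hj : 10 ≤ ⌊s⌋₊ := Nat.le_floor (by exact_mod_cast hs10)
    have hev := uB_ev B τ x ⌊s⌋₊ (max_eq_right hj).symm
    rw [lap_congr hev, hev.eq_of_nhds]
    have R := region P M hM hH hU hD ⌊s⌋₊ hj (Real.log ‖x‖) θ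
      (by rw [hexp]; exact Nat.floor_le (by linarith))
      (by rw [hexp]; exact (Nat.lt_floor_add_one s).le)
    rw [← hθ, hexp, Real.exp_log hxp, ← hKd] at R
    set f := fB B τ ⌊s⌋₊
    have e : lap f x * (‖x‖ : ℂ) ^ 2 + lam * (s : ℂ) ^ 4 * f x = ((s ^ 4 : ℝ) : ℂ) * (lap f x + lam * f x) := by
      rw [← hs2]; push_cast; ring
    rw [e, norm_mul, Complex.norm_real, Real.norm_of_nonneg (by positivity)] at R
    have hsp : 0 < s := by linarith
    have R2 : ‖lap f x + lam * f x‖ ≤ K * (1 / s) * ‖f x‖ := by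
      have h4 : 0 < s ^ 4 := by positivity
      refine le_of_mul_le_mul_left (R.trans (le_of_eq ?_)) h4
      field_simp
    refine R2.trans ?_
    apply mul_le_mul_of_nonneg_right _ (norm_nonneg _)
    have := jap_weight x s hsp (by rw [← hs2]; nlinarith [sq_nonneg s])
    have hy : 0 ≤ Real.sqrt (1 + ‖x‖ ^ 2) ^ (-(1 / 2 : ℝ)) := by positivity
    have h5 := mul_le_mul_of_nonneg_left this hKp.le
    have h6 : 0 ≤ 20 * |lam| * Real.sqrt (1 + ‖x‖ ^ 2) ^ (-(1 / 2 : ℝ)) := by positivity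
    linarith

lemma gB_ge {B : ℕ} {τ lam : ℝ} (P : Par B τ lam) (j : ℕ) (hj : 10 ≤ j) :
    1 / 2 * (2 * (j:ℝ) + 1) ≤ gB B τ j := by
  have hj' : (10:ℝ) ≤ j := by exact_mod_cast hj
  obtain ⟨t1, t2⟩ := tau_inv P
  have h2 := P.h2
  have hB : (4:ℝ) ≤ B := by exact_mod_cast P.hB
  have hp : (j:ℝ) ^ 2 ≤ qE B τ j := by
    unfold qE
    have e : (2 * (j:ℝ) + 1) / τ = (2 * j + 1) * (1 / τ) := by ring
    rw [e]
    have a1 : (2 * (j:ℝ) + 1) * (1 / τ) ≤ (2 * j + 1) * (3 / 2) :=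
      mul_le_mul_of_nonneg_left t2 (by linarith)
    have a2 : 7 / 10 * (2 * (j:ℝ) ^ 2 - 2 * j - 1) ≤ τ * (2 * (j:ℝ) ^ 2 - 2 * j - 1) :=
      mul_le_mul_of_nonneg_right h2 (by nlinarith)
    have a3 : (j:ℝ) ^ 2 / 2 ≤ τ * (2 * (j:ℝ) ^ 2 - 2 * j - 1) - (2 * j + 1) * (1 / τ) := by nlinarith
    have a4 : (2:ℝ) * (j ^ 2 / 2) ≤ B / 2 * (τ * (2 * (j:ℝ) ^ 2 - 2 * j - 1) - (2 * j + 1) * (1 / τ)) :=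
      mul_le_mul (by linarith) a3 (by positivity) (by positivity)
    linarith
  have hpq : qE B τ j ≤ pE B τ j := by
    unfold qE pE
    have : 0 ≤ (2 * (j:ℝ) + 1) / τ := by apply div_nonneg <;> linarith
    apply mul_le_mul_of_nonneg_left _ (by positivity)
    linarith
  have l1 : 0 ≤ Real.log ((j:ℝ) + 1 / 2) - Real.log j := by
    have := Real.log_le_log (by linarith : (0:ℝ) < j) (by linarith : (j:ℝ) ≤ j + 1 / 2)
    linarith
  have l2 : 0 ≤ Real.log ((j:ℝ) + 1) - Real.log (j + 1 / 2) := by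
    have := Real.log_le_log (by linarith : (0:ℝ) < j + 1 / 2) (by linarith : (j:ℝ) + 1 / 2 ≤ j + 1)
    linarith
  have l3 : 1 / ((j:ℝ) + 1) ≤ Real.log ((j:ℝ) + 1) - Real.log j := by
    have := Real.log_le_sub_one_of_pos (div_pos (by linarith : (0:ℝ) < j) (by linarith : (0:ℝ) < j + 1))
    rw [Real.log_div (by linarith) (by linarith)] at this
    have h3 : (j:ℝ) / (j + 1) = 1 - 1 / (j + 1) := by field_simp; ring
    linarith
  have g1 : (j:ℝ) ^ 2 * (2 * (Real.log ((j:ℝ) + 1) - Real.log j)) ≤ gB B τ j := by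
    unfold gB
    have b1 := mul_le_mul_of_nonneg_right (hp.trans hpq) l1
    have b2 := mul_le_mul_of_nonneg_right hp l2
    linarith
  have g2 : (j:ℝ) ^ 2 * (2 * (1 / ((j:ℝ) + 1))) ≤ (j:ℝ) ^ 2 * (2 * (Real.log ((j:ℝ) + 1) - Real.log j)) :=
    mul_le_mul_of_nonneg_left (by linarith) (by positivity)
  have g3 : 1 / 2 * (2 * (j:ℝ) + 1) ≤ (j:ℝ) ^ 2 * (2 * (1 / ((j:ℝ) + 1))) := by
    rw [show (j:ℝ) ^ 2 * (2 * (1 / ((j:ℝ) + 1))) = 2 * j ^ 2 / (j + 1) by ring,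
      le_div_iff₀ (by linarith)]
    nlinarith
  linarith

lemma cB_ge {B : ℕ} {τ lam : ℝ} (P : Par B τ lam) (i : ℕ) (hi : 10 ≤ i) :
    1 / 2 * (i:ℝ) ^ 2 - 50 + cB B τ 10 ≤ cB B τ i := by
  induction i, hi using Nat.le_induction with
  | base => norm_num
  | succ n hn ih =>
    have := gB_ge P n hn
    have e : cB B τ (n + 1) = cB B τ n + gB B τ n := by unfold cB; rw [Finset.sum_range_succ]
    rw [e]; push_cast; linarith

lemma aB_ge {B : ℕ} {τ lam : ℝ} (P : Par B τ lam) (M : ℝ) (hM : 1 ≤ M) (hH : CutB Hc M)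
    (i : ℕ) (hi : 10 ≤ i) (t : ℝ) (hsi : |Real.exp (t / 2) - i| ≤ 1) :
    1 / 4 * Real.exp (t / 2) ^ 2 - (50 - cB B τ 10 + (1 + 200 * B * M) ^ 2) ≤ aB B τ i t := by
  have hi' : (10:ℝ) ≤ i := by exact_mod_cast hi
  have ht : t = 2 * Real.log (Real.exp (t / 2)) := by rw [Real.log_exp]; ring
  have hs1 : 1 ≤ Real.exp (t / 2) := by rw [abs_le] at hsi; linarith
  obtain ⟨H0, -, -⟩ := cut_bounds Hc M hM hH i t hs1 (hsi.trans (by norm_num))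
  have hlog := log_near (Real.exp (t / 2)) i hs1 hi' hsi
  rw [← ht] at hlog
  have hq := qB_near P i hi
  have hd := abs_mul_le (dB_le P i hi) H0
  have hc := cB_ge P i hi
  set s := Real.exp (t / 2)
  have hs0 : 0 < s := by linarith
  have hB0 : (0:ℝ) ≤ B := by positivity
  rw [abs_le] at hsi
  have hτ : τ * B * i ^ 2 ≤ B * i ^ 2 := by
    apply mul_le_mul_of_nonneg_right _ (by positivity)
    have := P.h1; nlinarith
  have hτ0 : 0 ≤ τ * B * i ^ 2 := by have := P.h2; positivity
  have hii : (i:ℝ) ≤ i ^ 2 / 10 := by nlinarith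
  have hMB : B ≤ B * M := by nlinarith
  have hq2 : |qB B τ i + dB B τ i * cut Hc i t| ≤ 10 * B * M * i ^ 2 := by
    have k1 := abs_add_le (qB B τ i) (dB B τ i * cut Hc i t)
    have k2 : |qB B τ i| ≤ 3 * B * i ^ 2 := by
      rw [abs_le] at hq ⊢
      have : B * (i:ℝ) ≤ B * (i ^ 2 / 10) := mul_le_mul_of_nonneg_left hii hB0
      constructor <;> linarith
    have k3 : B * M * (i:ℝ) ≤ B * M * (i ^ 2 / 10) := mul_le_mul_of_nonneg_left hii (by positivity)
    have k4 : B * (i:ℝ) ^ 2 ≤ B * M * i ^ 2 := mul_le_mul_of_nonneg_right hMB (by positivity)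
    linarith
  have hprod := abs_mul_le hlog hq2
  have his : (i:ℝ) ≤ s * (11 / 10) + 1 - 1 / 10 * s := by linarith
  have hi2 : (i:ℝ) ^ 2 ≤ 5 * s ^ 2 := by nlinarith
  have h5 : 4 / s * (10 * B * M * i ^ 2) ≤ 200 * B * M * s := by
    rw [div_mul_eq_mul_div, div_le_iff₀ hs0]
    have : B * M * (i:ℝ) ^ 2 ≤ B * M * (5 * s ^ 2) := mul_le_mul_of_nonneg_left hi2 (by positivity)
    nlinarith
  have h6 := (abs_le.1 hprod).1
  unfold aB
  have h7 : 1 / 2 * (s - 1) ^ 2 ≤ 1 / 2 * (i:ℝ) ^ 2 := by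
    have : (s - 1) ^ 2 ≤ (i:ℝ) ^ 2 := pow_le_pow_left₀ (by linarith) (by linarith) 2
    linarith
  have h8 := sq_nonneg (s / 2 - (1 + 200 * B * M))
  nlinarith

lemma uB_decay {B : ℕ} {τ lam : ℝ} (P : Par B τ lam) (M : ℝ) (hM : 1 ≤ M) (hH : CutB Hc M) :
    ∃ C' : ℝ, 0 < C' ∧ ∀ x, ‖uB B τ x‖ ≤ C' * Real.exp (-(1 / 4 * ‖x‖)) := by
  obtain ⟨C2, hC2⟩ := (isCompact_closedBall (0 : E2) 100).exists_bound_of_continuousOn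
    (uB_cd B P.hB τ).continuous.continuousOn
  have hC20 : 0 ≤ C2 := (norm_nonneg _).trans (hC2 0 (by simp))
  set D := 50 - cB B τ 10 + (1 + 200 * B * M) ^ 2 with hD
  refine ⟨C2 * Real.exp 25 + 2 * Real.exp D, by positivity, fun x => ?_⟩
  rcases le_or_gt ‖x‖ 100 with hx | hx
  · have h1 := hC2 x (by simpa using hx)
    have h2 : C2 ≤ C2 * Real.exp 25 * Real.exp (-(1 / 4 * ‖x‖)) := by
      rw [mul_assoc, ← Real.exp_add]
      have : 1 ≤ Real.exp (25 + -(1 / 4 * ‖x‖)) := Real.one_le_exp (by linarith)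
      nlinarith
    have h3 : 0 ≤ 2 * Real.exp D * Real.exp (-(1 / 4 * ‖x‖)) := by positivity
    rw [add_mul]; linarith
  · have hxp : 0 < ‖x‖ := by linarith
    have h0 : x ≠ 0 := norm_pos_iff.1 hxp
    obtain ⟨θ, hθ⟩ := Psi_surj x h0
    have hexp := exp_half_log x h0
    set s := Real.sqrt ‖x‖ with hs
    have hs10 : 10 ≤ s := by rw [hs]; apply Real.le_sqrt_of_sq_le; linarith
    have hs2 : s ^ 2 = ‖x‖ := Real.sq_sqrt hxp.le
    have hj : 10 ≤ ⌊s⌋₊ := Nat.le_floor (by exact_mod_cast hs10)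
    have hev := (uB_ev B τ x ⌊s⌋₊ (max_eq_right hj).symm).eq_of_nhds
    have f1 : (⌊s⌋₊ : ℝ) ≤ s := Nat.floor_le (by linarith)
    have f2 : s < ⌊s⌋₊ + 1 := Nat.lt_floor_add_one s
    have A1 := aB_ge P M hM hH ⌊s⌋₊ hj (Real.log ‖x‖)
      (by rw [hexp, abs_le]; constructor <;> linarith)
    have A2 := aB_ge P M hM hH (⌊s⌋₊ + 1) (by omega) (Real.log ‖x‖)
      (by rw [hexp, abs_le]; push_cast; constructor <;> linarith)
    rw [hexp, hs2, ← hD] at A1 A2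
    have e : fB B τ ⌊s⌋₊ x = cut Dc ⌊s⌋₊ (Real.log ‖x‖) * eB B τ ⌊s⌋₊ (Real.log ‖x‖) θ +
        cut Uc ⌊s⌋₊ (Real.log ‖x‖) * eB B τ (⌊s⌋₊ + 1) (Real.log ‖x‖) θ := by
      conv_lhs => rw [hθ]
      exact fB_Psi _ _ _ _ _
    rw [hev, e]
    have d : 0 ≤ cut Dc ⌊s⌋₊ (Real.log ‖x‖) ∧ cut Dc ⌊s⌋₊ (Real.log ‖x‖) ≤ 1 := Dc_mem _
    have u : 0 ≤ cut Uc ⌊s⌋₊ (Real.log ‖x‖) ∧ cut Uc ⌊s⌋₊ (Real.log ‖x‖) ≤ 1 := Uc_mem _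
    refine (norm_add_le _ _).trans ?_
    rw [norm_mul, norm_mul, Complex.norm_real, Complex.norm_real, Real.norm_of_nonneg d.1,
      Real.norm_of_nonneg u.1, eB_norm, eB_norm]
    have b1 : Real.exp (-(aB B τ ⌊s⌋₊ (Real.log ‖x‖))) ≤ Real.exp D * Real.exp (-(1 / 4 * ‖x‖)) := by
      rw [← Real.exp_add]; apply Real.exp_le_exp.2; linarith
    have b2 : Real.exp (-(aB B τ (⌊s⌋₊ + 1) (Real.log ‖x‖))) ≤ Real.exp D * Real.exp (-(1 / 4 * ‖x‖)) := by
      rw [← Real.exp_add]; apply Real.exp_le_exp.2; linarith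
    have c1 := mul_le_mul d.2 b1 (Real.exp_pos _).le (by norm_num)
    have c2 := mul_le_mul u.2 b2 (Real.exp_pos _).le (by norm_num)
    have c3 : 0 ≤ C2 * Real.exp 25 * Real.exp (-(1 / 4 * ‖x‖)) := by positivity
    rw [add_mul]; linarith

lemma hard_case (lam : ℝ) (hl : 0 ≤ lam) :
    ∃ (C c : ℝ) (V u : EuclideanSpace ℝ (Fin 2) → ℂ),
      0 < C ∧ 0 < c ∧ u ≠ 0 ∧ ContDiff ℝ 2 u ∧
      (∀ x, lap u x + (lam : ℂ) * u x = V x * u x) ∧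
      (∀ x, 2 ≤ ‖x‖ →
        ‖V x‖ ≤ C * Real.log ‖x‖ * Real.sqrt (1 + ‖x‖ ^ 2) ^ (-(1 / 2 : ℝ))) ∧
      (∀ x, ‖x‖ < 2 → ‖V x‖ ≤ C) ∧
      (∀ x, ‖u x‖ ≤ C * Real.exp (-(c * ‖x‖))) := by
  obtain ⟨B, hB⟩ := exists_nat_ge (2 * lam + 4)
  have hB4 : (4:ℝ) ≤ B := by linarith
  have hB2 : 2 * lam ≤ (B:ℝ) ^ 2 := by nlinarith
  have hBp : (0:ℝ) < (B:ℝ) ^ 2 := by positivity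
  have hr : lam / (B:ℝ) ^ 2 ≤ 1 / 2 := by rw [div_le_iff₀ hBp]; linarith
  have hr0 : 0 ≤ lam / (B:ℝ) ^ 2 := by positivity
  have P : Par B (Real.sqrt (1 - lam / (B:ℝ) ^ 2)) lam := by
    refine ⟨by exact_mod_cast hB4, ?_, ?_, ?_⟩
    · exact Real.sqrt_le_iff.2 ⟨by norm_num, by linarith⟩
    · apply Real.le_sqrt_of_sq_le; linarith
    · rw [mul_pow, Real.sq_sqrt (by linarith)]; field_simp
  obtain ⟨M, hM, hH, hU, hD⟩ := cuts_M
  obtain ⟨C', hC', hdec⟩ := uB_decay P M hM hH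
  have hK := KB_ge B P.hB M hM
  have hK0 : 0 < KB B M := by linarith
  exact finish_aux lam _ _ (1 / 4) C' (by positivity) hC' (by norm_num) (uB_ne B P.hB _)
    (uB_cd B P.hB _) (uB_L P M hM hH hU hD) hdec

theorem stmt0 (lam : ℂ) :
    ∃ (C c : ℝ) (V u : EuclideanSpace ℝ (Fin 2) → ℂ),
      0 < C ∧ 0 < c ∧ u ≠ 0 ∧ ContDiff ℝ 2 u ∧
      (∀ x, lap u x + lam * u x = V x * u x) ∧
      (∀ x, 2 ≤ ‖x‖ →
        ‖V x‖ ≤ C * Real.log ‖x‖ * Real.sqrt (1 + ‖x‖ ^ 2) ^ (-(1 / 2 : ℝ))) ∧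
      (∀ x, ‖x‖ < 2 → ‖V x‖ ≤ C) ∧
      (∀ x, ‖u x‖ ≤ C * Real.exp (-(c * ‖x‖))) := by
  obtain ⟨k, hk⟩ := IsAlgClosed.exists_pow_nat_eq (-lam) (n := 2) (by norm_num)
  rcases lt_trichotomy k.re 0 with h | h | h
  · exact easy_case lam (-k) (by rw [neg_sq, hk]) (by simpa using h)
  · have hl : lam = ((k.im ^ 2 : ℝ) : ℂ) := by
      have h2 : lam = -k ^ 2 := by rw [hk]; ring
      rw [h2]
      apply Complex.ext <;> simp [pow_two, h]
    rw [hl]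
    exact hard_case (k.im ^ 2) (sq_nonneg _)
  · exact easy_case lam k hk h
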